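/- arXiv:1201.3089 — 8 statements merged into one kernel-verified Lean document; each statement's English description precedes it below -/
import Mathlib

section
/- There exists a constant K > 0 such that for all real numbers a ≥ 1 and R ≥ 1, one has |S(a,R) − π·log(1 + R²/a)| ≤ (K/√a)·min(1, R/√a), where S(a,R) = ∑_{k ∈ ℤ², |k| ≤ R} 1/(a + |k|²). -/
/-!
Let `N(t) = #{k ∈ ℤ² : |k|² ≤ t}`. Gauss's argument (`abs_count_sub_le`) gives
`|N(t) - π t| ≤ 4π (1 + √t)`: the unit squares with lower left corner `k`, for `|k|² ≤ t`, have
total area `N(t)` and their union lies between the discs of radii `√t - 2` and `√t + 2`.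

Writing `1/(a + |k|²) = 1/(a + R²) + ∫_{|k|²}^{R²} dt/(a + t)²` and summing over `k` yields
`S(a,R) = N(R²)/(a + R²) + ∫_0^{R²} N(t)/(a + t)² dt`, and the same identity with `π t` in place
of `N(t)` evaluates to `π log(1 + R²/a)`. Hence the error is at most
`4π ((1 + R)/(a + R²) + ∫_0^{R²} (1 + √t)/(a + t)² dt)`. The integral is at most `4/√a`, because
`1 + √t ≤ 2√(a + t)`, and at most `2R/a`, because `1 + √t ≤ 2R` on the range of integration.
-/

open Real Filter Set MeasureTheory

/-- The lattice sum `S(a,R) = ∑_{k ∈ ℤ², |k| ≤ R} 1/(a + |k|²)`, where `|k|` is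
the Euclidean norm of the integer lattice point `k = (k₁, k₂)`. Only finitely
many terms are nonzero, so the `tsum` equals the finite sum. -/
noncomputable def latticeSum (a R : ℝ) : ℝ :=
  ∑' k : ℤ × ℤ,
    if (k.1 : ℝ) ^ 2 + (k.2 : ℝ) ^ 2 ≤ R ^ 2 then
      1 / (a + ((k.1 : ℝ) ^ 2 + (k.2 : ℝ) ^ 2))
    else 0

/-- The half-open unit square in `ℂ` with lower left corner `k`. -/
def unitSquare (k : ℤ × ℤ) : Set ℂ := {z | ⌊z.re⌋ = k.1 ∧ ⌊z.im⌋ = k.2}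

lemma unitSquare_eq_preimage (k : ℤ × ℤ) :
    unitSquare k = Complex.measurableEquivRealProd ⁻¹'
      (Ico (k.1 : ℝ) (k.1 + 1) ×ˢ Ico (k.2 : ℝ) (k.2 + 1)) := by
  ext z
  simp [unitSquare, Int.floor_eq_iff, Complex.measurableEquivRealProd_apply]

lemma measurableSet_unitSquare (k : ℤ × ℤ) : MeasurableSet (unitSquare k) := by
  rw [unitSquare_eq_preimage]
  exact Complex.measurableEquivRealProd.measurable (measurableSet_Ico.prod measurableSet_Ico)

lemma volume_unitSquare (k : ℤ × ℤ) : volume (unitSquare k) = 1 := by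
  rw [unitSquare_eq_preimage, Complex.volume_preserving_equiv_real_prod.measure_preimage
    (measurableSet_Ico.prod measurableSet_Ico).nullMeasurableSet, Measure.volume_eq_prod,
    Measure.prod_prod]
  simp

lemma volume_real_iUnion_unitSquare (F : Finset (ℤ × ℤ)) :
    volume.real (⋃ k ∈ F, unitSquare k) = F.card := by
  rw [measureReal_biUnion_finset _ (fun k _ => measurableSet_unitSquare k)
    (fun k _ => by simp [volume_unitSquare])]
  · simp [measureReal_def, volume_unitSquare]
  · intro k _ l _ hkl
    refine Set.disjoint_left.2 fun z hz hz' => hkl ?_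
    exact Prod.ext (hz.1.symm.trans hz'.1) (hz.2.symm.trans hz'.2)

lemma norm_sub_floor_le (z : ℂ) : ‖z - ⟨(⌊z.re⌋ : ℝ), (⌊z.im⌋ : ℝ)⟩‖ ≤ 2 := by
  refine (Complex.norm_le_abs_re_add_abs_im _).trans ?_
  have h1 : |z.re - ⌊z.re⌋| ≤ 1 := by
    rw [abs_le]; constructor <;> linarith [Int.floor_le z.re, Int.lt_floor_add_one z.re]
  have h2 : |z.im - ⌊z.im⌋| ≤ 1 := by
    rw [abs_le]; constructor <;> linarith [Int.floor_le z.im, Int.lt_floor_add_one z.im]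
  simp only [Complex.sub_re, Complex.sub_im]
  linarith

lemma norm_intPoint_le_iff {x y r : ℝ} (hr : 0 ≤ r) :
    ‖(⟨x, y⟩ : ℂ)‖ ≤ r ↔ x ^ 2 + y ^ 2 ≤ r ^ 2 := by
  rw [← sq_le_sq₀ (norm_nonneg _) hr, Complex.sq_norm, Complex.normSq_apply]
  simp only [sq]

lemma volume_real_closedBall_complex {r : ℝ} (hr : 0 ≤ r) :
    volume.real (Metric.closedBall (0 : ℂ) r) = π * r ^ 2 := by
  rw [measureReal_def, Complex.volume_closedBall]
  simp [hr, mul_comm]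

/-- Gauss's bound for the number of lattice points in a disc of radius `r`. The points are counted
inside an arbitrary finite set `D` that contains all of them. -/
lemma abs_count_sub_le (D : Finset (ℤ × ℤ)) {r : ℝ} (hr : 0 ≤ r)
    (hD : ∀ k : ℤ × ℤ, (k.1 : ℝ) ^ 2 + (k.2 : ℝ) ^ 2 ≤ r ^ 2 → k ∈ D) :
    |(∑ k ∈ D, if (k.1 : ℝ) ^ 2 + (k.2 : ℝ) ^ 2 ≤ r ^ 2 then (1 : ℝ) else 0) - π * r ^ 2|
      ≤ 4 * π * (1 + r) := by
  classical
  have hπ := Real.pi_pos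
  rw [Finset.sum_boole]
  set F := D.filter fun k : ℤ × ℤ => (k.1 : ℝ) ^ 2 + (k.2 : ℝ) ^ 2 ≤ r ^ 2 with hF
  have hmem : ∀ k : ℤ × ℤ, k ∈ F ↔ ‖(⟨(k.1 : ℝ), (k.2 : ℝ)⟩ : ℂ)‖ ≤ r := fun k => by
    rw [norm_intPoint_le_iff hr, hF, Finset.mem_filter]
    exact ⟨fun h => h.2, fun h => ⟨hD k h, h⟩⟩
  have hsub : (⋃ k ∈ F, unitSquare k) ⊆ Metric.closedBall (0 : ℂ) (r + 2) := by
    intro z hz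
    simp only [mem_iUnion] at hz
    obtain ⟨k, hk, hz1, hz2⟩ := hz
    rw [hmem, ← hz1, ← hz2] at hk
    rw [mem_closedBall_zero_iff]
    linarith [norm_le_norm_add_norm_sub' z ⟨(⌊z.re⌋ : ℝ), (⌊z.im⌋ : ℝ)⟩, norm_sub_floor_le z]
  have hupper : (F.card : ℝ) ≤ π * (r + 2) ^ 2 := by
    rw [← volume_real_iUnion_unitSquare, ← volume_real_closedBall_complex (by linarith)]
    exact measureReal_mono hsub measure_closedBall_lt_top.ne
  have hlower : π * r ^ 2 - 4 * π * (1 + r) ≤ F.card := by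
    rcases le_or_gt r 2 with h | h
    · have : (0 : ℝ) ≤ F.card := Nat.cast_nonneg _
      nlinarith [mul_nonneg hπ.le (mul_nonneg hr (sub_nonneg.2 h))]
    · have hsub' : Metric.closedBall (0 : ℂ) (r - 2) ⊆ ⋃ k ∈ F, unitSquare k := by
        intro z hz
        rw [mem_closedBall_zero_iff] at hz
        simp only [mem_iUnion]
        refine ⟨(⌊z.re⌋, ⌊z.im⌋), (hmem _).2 ?_, rfl, rfl⟩
        have := norm_le_norm_add_norm_sub z (⟨(⌊z.re⌋ : ℝ), (⌊z.im⌋ : ℝ)⟩ : ℂ)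
        linarith [norm_sub_floor_le z]
      have := measureReal_mono (μ := volume) hsub'
        (ne_top_of_le_ne_top measure_closedBall_lt_top.ne (measure_mono hsub))
      rw [volume_real_iUnion_unitSquare, volume_real_closedBall_complex (by linarith)] at this
      nlinarith
  rw [abs_le]
  constructor <;> nlinarith

lemma continuousOn_weight {a s : ℝ} (ha : 0 < a) (hs : 0 ≤ s) (T : ℝ) :
    ContinuousOn (fun t : ℝ => 1 / (a + t) ^ 2) (Icc s T) := by
  refine ContinuousOn.div continuousOn_const (by fun_prop) fun t ht => ?_
  have : 0 < a + t := by linarith [ht.1]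
  positivity

lemma integral_weight {a c T : ℝ} (ha : 0 < a) (hc : 0 ≤ c) (hcT : c ≤ T) :
    ∫ t in c..T, 1 / (a + t) ^ 2 = 1 / (a + c) - 1 / (a + T) := by
  rw [intervalIntegral.integral_eq_sub_of_hasDerivAt (f := fun t => -(a + t)⁻¹)]
  · simp only [one_div]; ring
  · intro t ht
    rw [uIcc_of_le hcT] at ht
    have h : a + t ≠ 0 := by linarith [ht.1]
    refine (((hasDerivAt_id' t).const_add a).inv h).neg.congr_deriv ?_
    ring
  · exact (continuousOn_weight ha hc T).intervalIntegrable_of_Icc hcT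

lemma intervalIntegrable_step {a : ℝ} (ha : 0 < a) (c : ℝ) {T : ℝ} (hT : 0 ≤ T) :
    IntervalIntegrable (fun t => (if c ≤ t then (1 : ℝ) else 0) * (1 / (a + t) ^ 2))
      volume 0 T := by
  have h : (fun t => (if c ≤ t then (1 : ℝ) else 0) * (1 / (a + t) ^ 2))
      = (Ici c).indicator fun t => 1 / (a + t) ^ 2 := by
    ext t; simp [indicator_apply]
  have hi := (continuousOn_weight ha le_rfl T).intervalIntegrable_of_Icc (μ := volume) hT
  rw [h, intervalIntegrable_iff_integrableOn_Ioc_of_le hT]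
  exact ((intervalIntegrable_iff_integrableOn_Ioc_of_le hT).1 hi).indicator measurableSet_Ici

lemma integral_step {a c T : ℝ} (ha : 0 < a) (hc : 0 ≤ c) (hcT : c ≤ T) :
    ∫ t in (0 : ℝ)..T, (if c ≤ t then (1 : ℝ) else 0) * (1 / (a + t) ^ 2)
      = 1 / (a + c) - 1 / (a + T) := by
  have h : (fun t => (if c ≤ t then (1 : ℝ) else 0) * (1 / (a + t) ^ 2))
      = (Ici c).indicator fun t => 1 / (a + t) ^ 2 := by
    ext t; simp [indicator_apply]
  rw [← integral_weight ha hc hcT, h, intervalIntegral.integral_of_le (hc.trans hcT),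
    intervalIntegral.integral_of_le hcT, setIntegral_indicator measurableSet_Ici]
  rcases hc.eq_or_lt with rfl | hc'
  · congr 2
    ext t; simp only [mem_inter_iff, mem_Ioc, mem_Ici]; grind
  · rw [← integral_Icc_eq_integral_Ioc]
    congr 2
    ext t; simp only [mem_inter_iff, mem_Ioc, mem_Ici, mem_Icc]; grind

/-- The counterpart for `π t` of the partial summation identity for the lattice sum. -/
lemma pi_mul_log_eq {a T : ℝ} (ha : 0 < a) (hT : 0 ≤ T) :
    π * Real.log (1 + T / a)
      = π * T / (a + T) + ∫ t in (0 : ℝ)..T, π * t * (1 / (a + t) ^ 2) := by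
  rw [intervalIntegral.integral_eq_sub_of_hasDerivAt
    (f := fun t => π * (Real.log (a + t) + a * (a + t)⁻¹))]
  · have h : 1 + T / a = (a + T) / a := by field_simp
    have h' : a + T ≠ 0 := by positivity
    rw [h, Real.log_div h' ha.ne']
    simp only [add_zero]
    field_simp
    ring
  · intro t ht
    rw [uIcc_of_le hT] at ht
    have h : a + t ≠ 0 := by linarith [ht.1]
    have hd := (hasDerivAt_id' t).const_add a
    refine (((hd.log h).add ((hd.inv h).const_mul a)).const_mul π).congr_deriv ?_
    field_simp
    ring
  · refine ContinuousOn.intervalIntegrable_of_Icc hT ?_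
    exact ContinuousOn.mul (by fun_prop) (continuousOn_weight ha le_rfl T)

lemma integral_error_le_div {a R : ℝ} (ha : 0 < a) (hR : 1 ≤ R) :
    ∫ t in (0 : ℝ)..R ^ 2, (1 + √t) * (1 / (a + t) ^ 2) ≤ 2 * R / a := by
  have hw := continuousOn_weight ha le_rfl (R ^ 2)
  have hR2 : (0 : ℝ) ≤ R ^ 2 := by positivity
  calc ∫ t in (0 : ℝ)..R ^ 2, (1 + √t) * (1 / (a + t) ^ 2)
      ≤ ∫ t in (0 : ℝ)..R ^ 2, (2 * R) * (1 / (a + t) ^ 2) := by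
        refine intervalIntegral.integral_mono_on hR2 ?_ ?_ fun t ht => ?_
        · exact ContinuousOn.intervalIntegrable_of_Icc hR2
            (ContinuousOn.mul (by fun_prop) hw)
        · exact ContinuousOn.intervalIntegrable_of_Icc hR2
            (ContinuousOn.mul (by fun_prop) hw)
        · have : √t ≤ R := Real.sqrt_le_iff.2 ⟨by linarith, ht.2⟩
          have h0 : 0 ≤ 1 / (a + t) ^ 2 := by positivity
          exact mul_le_mul_of_nonneg_right (by linarith) h0
    _ = 2 * R * (1 / a - 1 / (a + R ^ 2)) := by
        rw [intervalIntegral.integral_const_mul, integral_weight ha le_rfl hR2, add_zero]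
    _ ≤ 2 * R / a := by
        have : 0 ≤ 1 / (a + R ^ 2) := by positivity
        rw [mul_div_assoc, mul_assoc, mul_sub, div_eq_mul_one_div R a]
        nlinarith

lemma integral_error_le_sqrt {a T : ℝ} (ha : 1 ≤ a) (hT : 0 ≤ T) :
    ∫ t in (0 : ℝ)..T, (1 + √t) * (1 / (a + t) ^ 2) ≤ 4 / √a := by
  have ha0 : 0 < a := by linarith
  have hw := continuousOn_weight ha0 le_rfl T
  have hcont : ContinuousOn (fun t => 2 * √(a + t) * (1 / (a + t) ^ 2)) (Icc 0 T) :=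
    ContinuousOn.mul (by fun_prop) hw
  calc ∫ t in (0 : ℝ)..T, (1 + √t) * (1 / (a + t) ^ 2)
      ≤ ∫ t in (0 : ℝ)..T, 2 * √(a + t) * (1 / (a + t) ^ 2) := by
        refine intervalIntegral.integral_mono_on hT ?_ ?_ fun t ht => ?_
        · exact ContinuousOn.intervalIntegrable_of_Icc hT
            (ContinuousOn.mul (by fun_prop) hw)
        · exact hcont.intervalIntegrable_of_Icc hT
        · have h1 : 1 ≤ √(a + t) := Real.one_le_sqrt.2 (by linarith [ht.1])
          have h2 : √t ≤ √(a + t) := Real.sqrt_le_sqrt (by linarith)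
          have h0 : 0 ≤ 1 / (a + t) ^ 2 := by positivity
          exact mul_le_mul_of_nonneg_right (by linarith) h0
    _ = -(4 * (√(a + T))⁻¹) - -(4 * (√(a + 0))⁻¹) := by
        rw [intervalIntegral.integral_eq_sub_of_hasDerivAt (f := fun t => -(4 * (√(a + t))⁻¹))]
        · intro t ht
          rw [uIcc_of_le hT] at ht
          have h : 0 < a + t := by linarith [ht.1]
          have hs : 0 < √(a + t) := Real.sqrt_pos.2 h
          have hd := ((hasDerivAt_id' t).const_add a).sqrt h.ne'
          refine ((hd.inv hs.ne').const_mul 4).neg.congr_deriv ?_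
          have hsq : (a + t) = √(a + t) ^ 2 := (Real.sq_sqrt h.le).symm
          set s := √(a + t)
          rw [hsq]
          field_simp
          ring
        · exact hcont.intervalIntegrable_of_Icc hT
    _ ≤ 4 / √a := by
        have : 0 ≤ 4 * (√(a + T))⁻¹ := by positivity
        rw [add_zero, div_eq_mul_inv]; linarith

/-- Partial summation: `S(a,R) = N(R²)/(a + R²) + ∫_0^{R²} N(t)/(a + t)² dt`, where `N(t)` counts
the points of `D` with squared norm at most `t`. -/
lemma latticeSum_eq {a R : ℝ} (ha : 0 < a) (D : Finset (ℤ × ℤ))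
    (hD : ∀ k : ℤ × ℤ, k ∈ D ↔ (k.1 : ℝ) ^ 2 + (k.2 : ℝ) ^ 2 ≤ R ^ 2) :
    latticeSum a R
      = (∑ k ∈ D, if (k.1 : ℝ) ^ 2 + (k.2 : ℝ) ^ 2 ≤ R ^ 2 then (1 : ℝ) else 0) / (a + R ^ 2)
        + ∫ t in (0 : ℝ)..R ^ 2,
          (∑ k ∈ D, if (k.1 : ℝ) ^ 2 + (k.2 : ℝ) ^ 2 ≤ t then (1 : ℝ) else 0)
            * (1 / (a + t) ^ 2) := by
  have hR2 : (0 : ℝ) ≤ R ^ 2 := by positivity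
  simp only [Finset.sum_mul]
  rw [intervalIntegral.integral_finsetSum fun k _ => intervalIntegrable_step ha _ hR2,
    Finset.sum_div, ← Finset.sum_add_distrib, latticeSum, tsum_eq_sum (s := D)]
  · refine Finset.sum_congr rfl fun k hk => ?_
    rw [integral_step ha (by positivity) ((hD k).1 hk), if_pos ((hD k).1 hk),
      if_pos ((hD k).1 hk)]
    ring
  · intro k hk
    rw [if_neg fun h => hk ((hD k).2 h)]

lemma exists_finset_disc (R : ℝ) : ∃ D : Finset (ℤ × ℤ),
    ∀ k : ℤ × ℤ, k ∈ D ↔ (k.1 : ℝ) ^ 2 + (k.2 : ℝ) ^ 2 ≤ R ^ 2 := by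
  classical
  refine ⟨(Finset.Icc (-⌈|R|⌉) ⌈|R|⌉ ×ˢ Finset.Icc (-⌈|R|⌉) ⌈|R|⌉).filter
    fun k : ℤ × ℤ => (k.1 : ℝ) ^ 2 + (k.2 : ℝ) ^ 2 ≤ R ^ 2, fun k => ?_⟩
  rw [Finset.mem_filter, and_iff_right_iff_imp]
  have key : ∀ m : ℤ, (m : ℝ) ^ 2 ≤ R ^ 2 → -⌈|R|⌉ ≤ m ∧ m ≤ ⌈|R|⌉ := fun m hm => by
    have h := abs_le.1 (sq_le_sq.1 hm)
    have hc := Int.le_ceil |R|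
    constructor
    · have : ((-⌈|R|⌉ : ℤ) : ℝ) ≤ m := by push_cast; linarith
      exact_mod_cast this
    · have : (m : ℝ) ≤ ⌈|R|⌉ := by linarith
      exact_mod_cast this
  intro h
  simp only [Finset.mem_product, Finset.mem_Icc]
  exact ⟨key _ (by nlinarith [sq_nonneg (k.2 : ℝ)]), key _ (by nlinarith [sq_nonneg (k.1 : ℝ)])⟩

/-- There exists a constant `K > 0` such that for all `a ≥ 1`, `R ≥ 1`,
`|S(a,R) − π log(1 + R²/a)| ≤ (K/√a) · min(1, R/√a)`. -/
theorem stmt0 :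
    ∃ K > (0 : ℝ), ∀ a R : ℝ, 1 ≤ a → 1 ≤ R →
      |latticeSum a R - π * Real.log (1 + R ^ 2 / a)| ≤
        K / Real.sqrt a * min 1 (R / Real.sqrt a) := by
  refine ⟨20 * π, by positivity, fun a R ha hR => ?_⟩
  have hπ := Real.pi_pos
  have ha0 : 0 < a := by linarith
  have hR2 : (0 : ℝ) ≤ R ^ 2 := by positivity
  obtain ⟨D, hD⟩ := exists_finset_disc R
  have hw := continuousOn_weight ha0 le_rfl (R ^ 2)
  set N : ℝ → ℝ := fun t => ∑ k ∈ D, if (k.1 : ℝ) ^ 2 + (k.2 : ℝ) ^ 2 ≤ t then (1 : ℝ) else 0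
    with hN
  have hgauss : ∀ t ∈ Icc 0 (R ^ 2), |N t - π * t| ≤ 4 * π * (1 + √t) := fun t ht => by
    have := abs_count_sub_le D (Real.sqrt_nonneg t)
      fun k hk => (hD k).2 (hk.trans ((Real.sq_sqrt ht.1).le.trans ht.2))
    rwa [Real.sq_sqrt ht.1] at this
  have hNint : IntervalIntegrable (fun t => N t * (1 / (a + t) ^ 2)) volume 0 (R ^ 2) := by
    have := IntervalIntegrable.sum D fun k _ =>
      intervalIntegrable_step ha0 ((k.1 : ℝ) ^ 2 + (k.2 : ℝ) ^ 2) hR2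
    refine this.congr fun t _ => ?_
    simp only [hN, Finset.sum_mul, Finset.sum_apply]
  have hπint : IntervalIntegrable (fun t => π * t * (1 / (a + t) ^ 2)) volume 0 (R ^ 2) :=
    ContinuousOn.intervalIntegrable_of_Icc hR2 (ContinuousOn.mul (by fun_prop) hw)
  have hEint : IntervalIntegrable (fun t => 4 * π * ((1 + √t) * (1 / (a + t) ^ 2)))
      volume 0 (R ^ 2) :=
    ContinuousOn.intervalIntegrable_of_Icc hR2
      (ContinuousOn.mul (by fun_prop) (ContinuousOn.mul (by fun_prop) hw))
  have hsplit : latticeSum a R - π * Real.log (1 + R ^ 2 / a)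
      = (N (R ^ 2) - π * R ^ 2) / (a + R ^ 2)
        + ∫ t in (0 : ℝ)..R ^ 2, (N t - π * t) * (1 / (a + t) ^ 2) := by
    have h1 : latticeSum a R = N (R ^ 2) / (a + R ^ 2)
        + ∫ t in (0 : ℝ)..R ^ 2, N t * (1 / (a + t) ^ 2) := latticeSum_eq ha0 D hD
    simp only [sub_mul]
    rw [h1, pi_mul_log_eq ha0 hR2, intervalIntegral.integral_sub hNint hπint]
    ring
  have hbdry : |(N (R ^ 2) - π * R ^ 2) / (a + R ^ 2)| ≤ 4 * π * (2 * R / (a + R ^ 2)) := by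
    have h := hgauss (R ^ 2) ⟨hR2, le_rfl⟩
    rw [Real.sqrt_sq (by linarith)] at h
    have hp : 0 < a + R ^ 2 := by positivity
    rw [abs_div, abs_of_pos hp, ← mul_div_assoc]
    gcongr
    refine h.trans ?_
    gcongr
    linarith
  have hint : |∫ t in (0 : ℝ)..R ^ 2, (N t - π * t) * (1 / (a + t) ^ 2)|
      ≤ 4 * π * ∫ t in (0 : ℝ)..R ^ 2, (1 + √t) * (1 / (a + t) ^ 2) := by
    rw [← intervalIntegral.integral_const_mul, ← Real.norm_eq_abs]
    refine intervalIntegral.norm_integral_le_of_norm_le hR2 ?_ hEint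
    refine Eventually.of_forall fun t ht => ?_
    have h0 : 0 ≤ 1 / (a + t) ^ 2 := by positivity
    rw [Real.norm_eq_abs, abs_mul, abs_of_nonneg h0, ← mul_assoc]
    exact mul_le_mul_of_nonneg_right (hgauss t (Ioc_subset_Icc_self ht)) h0
  set I := ∫ t in (0 : ℝ)..R ^ 2, (1 + √t) * (1 / (a + t) ^ 2)
  have htotal : |latticeSum a R - π * Real.log (1 + R ^ 2 / a)|
      ≤ 4 * π * (2 * R / (a + R ^ 2) + I) := by
    rw [hsplit, mul_add]
    exact (abs_add_le _ _).trans (add_le_add hbdry hint)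
  have hs : 0 < √a := Real.sqrt_pos.2 ha0
  have hsa : √a * √a = a := Real.mul_self_sqrt ha0.le
  have hb1 : 2 * R / (a + R ^ 2) ≤ 1 / √a := by
    rw [div_le_div_iff₀ (by positivity) hs]
    nlinarith [sq_nonneg (√a - R)]
  have hb2 : 2 * R / (a + R ^ 2) ≤ 2 * R / a := by
    gcongr
    linarith
  have hi1 : I ≤ 4 / √a := integral_error_le_sqrt ha hR2
  have hi2 : I ≤ 2 * R / a := integral_error_le_div ha0 hR
  refine htotal.trans ?_
  rw [mul_min_of_nonneg _ _ (by positivity)]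
  refine le_min ?_ ?_
  · calc 4 * π * (2 * R / (a + R ^ 2) + I) ≤ 4 * π * (1 / √a + 4 / √a) := by gcongr
      _ = 20 * π / √a * 1 := by ring
  · calc 4 * π * (2 * R / (a + R ^ 2) + I) ≤ 4 * π * (2 * R / a + 2 * R / a) := by gcongr
      _ = 16 * π * (R / a) := by ring
      _ ≤ 20 * π * (R / a) := by gcongr; norm_num
      _ = 20 * π / √a * (R / √a) := by
        rw [div_mul_div_comm, hsa]; ring
end

section
/- For all real numbers a ≥ 1 and R ≥ 1, one has ∑_{k ∈ ℤ², |k| ≤ R, k₁ > 0, k₂ > 0} 1/(a + |k|²) ≤ (1/4)·∫_{{k ∈ ℝ² : |k| ≤ R}} 1/(a + |k|²) dk ≤ ∑_{k ∈ ℤ², |k| ≤ R, k₁ ≥ 0, k₂ ≥ 0} 1/(a + |k|²). -/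
/-!
The function `f(x) = 1/(a + |x|²)` cut off to the disk of radius `R` is nonnegative, even in each
coordinate, and nonincreasing in `|x₁|` and `|x₂|` (`diskFun_anti`). Instead of splitting the disk
into quadrants, label a point of the plane by `(⌈|x₁|⌉, ⌈|x₂|⌉)`: each pair of positive integers
labels a set of area `4` (`volume_ceil_abs`), and `f` at the label is at most `f(x)`. Integrating
gives four times the open-quadrant sum on the left. The label `(⌊|x₁|⌋, ⌊|x₂|⌋)` reverses the
inequality; now each pair of nonnegative integers labels a set of area `4` (`volume_floor_abs`),
which gives the closed-quadrant sum. Both sums are finite, so the integration is that of a simple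
function (`integral_cells`).
-/

open Real Filter Set MeasureTheory

/-- The quadrant lattice sum `∑_{k ∈ ℤ², |k| ≤ R, k₁ > 0, k₂ > 0} 1/(a + |k|²)`. -/
noncomputable def quadrantSumPos (a R : ℝ) : ℝ :=
  ∑' k : ℤ × ℤ,
    if 0 < k.1 ∧ 0 < k.2 ∧ (k.1 : ℝ) ^ 2 + (k.2 : ℝ) ^ 2 ≤ R ^ 2 then
      1 / (a + ((k.1 : ℝ) ^ 2 + (k.2 : ℝ) ^ 2))
    else 0

/-- The quadrant lattice sum `∑_{k ∈ ℤ², |k| ≤ R, k₁ ≥ 0, k₂ ≥ 0} 1/(a + |k|²)`. -/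
noncomputable def quadrantSumNonneg (a R : ℝ) : ℝ :=
  ∑' k : ℤ × ℤ,
    if 0 ≤ k.1 ∧ 0 ≤ k.2 ∧ (k.1 : ℝ) ^ 2 + (k.2 : ℝ) ^ 2 ≤ R ^ 2 then
      1 / (a + ((k.1 : ℝ) ^ 2 + (k.2 : ℝ) ^ 2))
    else 0

/-- The cells of a measurable labelling `p × p` of the plane, where each label used has a
preimage of length `2` under `p`, have area `4`; so a finite combination of their indicators
integrates to four times the sum of the coefficients. -/
lemma integral_cells (p : ℝ → ℤ) (hp : Measurable p) (S : Finset ℤ) (g : ℤ × ℤ → ℝ)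
    (hS : ∀ n ∈ S, volume (p ⁻¹' {n}) = 2) :
    Integrable (fun x : ℝ × ℝ => ∑ k ∈ S ×ˢ S, if (p x.1, p x.2) = k then g k else 0) ∧
    ∫ x : ℝ × ℝ, (∑ k ∈ S ×ˢ S, if (p x.1, p x.2) = k then g k else 0)
      = 4 * ∑ k ∈ S ×ˢ S, g k := by
  have hform : ∀ k : ℤ × ℤ, (fun x : ℝ × ℝ => if (p x.1, p x.2) = k then g k else 0)
      = ((p ⁻¹' {k.1}) ×ˢ (p ⁻¹' {k.2})).indicator (fun _ => g k) := by
    intro k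
    classical
    ext x
    simp [Set.indicator_apply, Prod.ext_iff]
  have hmeas : ∀ k : ℤ × ℤ, MeasurableSet ((p ⁻¹' {k.1}) ×ˢ (p ⁻¹' {k.2})) := fun k =>
    (hp (measurableSet_singleton _)).prod (hp (measurableSet_singleton _))
  have hvol : ∀ k ∈ S ×ˢ S,
      (volume : Measure (ℝ × ℝ)) ((p ⁻¹' {k.1}) ×ˢ (p ⁻¹' {k.2})) = 4 := by
    intro k hk
    rw [Finset.mem_product] at hk
    rw [Measure.volume_eq_prod, Measure.prod_prod, hS _ hk.1, hS _ hk.2]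
    norm_num
  have hint : ∀ k ∈ S ×ˢ S,
      Integrable (fun x : ℝ × ℝ => if (p x.1, p x.2) = k then g k else 0) := by
    intro k hk
    rw [hform, integrable_indicator_iff (hmeas k)]
    exact integrableOn_const (by rw [hvol k hk]; norm_num)
  refine ⟨integrable_finsetSum _ hint, ?_⟩
  rw [integral_finsetSum _ hint, Finset.mul_sum]
  refine Finset.sum_congr rfl fun k hk => ?_
  rw [hform, integral_indicator (hmeas k), setIntegral_const, measureReal_def, hvol k hk]
  simp

lemma volume_ceil_abs (n : ℤ) (hn : 1 ≤ n) :
    volume ((fun x : ℝ => ⌈|x|⌉) ⁻¹' {n}) = 2 := by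
  have hn' : (1 : ℝ) ≤ n := by exact_mod_cast hn
  have : (fun x : ℝ => ⌈|x|⌉) ⁻¹' {n} = Set.Ioc ((n : ℝ) - 1) n ∪ Set.Ico (-(n : ℝ)) (1 - n) := by
    ext x
    simp only [Set.mem_preimage, Set.mem_singleton_iff, Int.ceil_eq_iff, Set.mem_union,
      Set.mem_Ioc, Set.mem_Ico]
    rcases abs_cases x with ⟨h, h'⟩ | ⟨h, h'⟩ <;> rw [h] <;> grind
  rw [this, measure_union _ measurableSet_Ico, Real.volume_Ioc, Real.volume_Ico]
  · norm_num
  · rw [Set.disjoint_left]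
    intro x h1 h2
    linarith [h1.1, h2.2]

lemma volume_floor_abs (n : ℤ) (hn : 0 ≤ n) :
    volume ((fun x : ℝ => ⌊|x|⌋) ⁻¹' {n}) = 2 := by
  have hn' : (0 : ℝ) ≤ n := by exact_mod_cast hn
  -- Both pieces contain `0` when `n = 0`, so the overlap is only null.
  have : (fun x : ℝ => ⌊|x|⌋) ⁻¹' {n} = Set.Ico (n : ℝ) (n + 1) ∪ Set.Ioc (-(n : ℝ) - 1) (-n) := by
    ext x
    simp only [Set.mem_preimage, Set.mem_singleton_iff, Int.floor_eq_iff, Set.mem_union,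
      Set.mem_Ioc, Set.mem_Ico]
    rcases abs_cases x with ⟨h, h'⟩ | ⟨h, h'⟩ <;> rw [h] <;> grind
  have hd : AEDisjoint volume (Set.Ico (n : ℝ) (n + 1)) (Set.Ioc (-(n : ℝ) - 1) (-n)) := by
    refine measure_mono_null (t := {(n : ℝ)}) ?_ (by simp)
    rintro x ⟨h1, h2⟩
    exact le_antisymm (by linarith [h2.2]) h1.1
  rw [this, measure_union₀ measurableSet_Ioc.nullMeasurableSet hd, Real.volume_Ioc,
    Real.volume_Ico]
  norm_num

/-- `1/(a + x² + y²)` cut off to the disk of radius `R`. -/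
noncomputable def diskFun (a R : ℝ) (x : ℝ × ℝ) : ℝ :=
  if x.1 ^ 2 + x.2 ^ 2 ≤ R ^ 2 then 1 / (a + (x.1 ^ 2 + x.2 ^ 2)) else 0

lemma diskFun_nonneg {a R : ℝ} (ha : 1 ≤ a) (x : ℝ × ℝ) : 0 ≤ diskFun a R x := by
  unfold diskFun
  split_ifs <;> positivity

lemma diskFun_anti {a R : ℝ} (ha : 1 ≤ a) {x y : ℝ × ℝ} (h1 : |x.1| ≤ |y.1|)
    (h2 : |x.2| ≤ |y.2|) : diskFun a R y ≤ diskFun a R x := by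
  have h1' := sq_le_sq.2 h1
  have h2' := sq_le_sq.2 h2
  by_cases hy : y.1 ^ 2 + y.2 ^ 2 ≤ R ^ 2
  · have hx : x.1 ^ 2 + x.2 ^ 2 ≤ R ^ 2 := by linarith
    rw [diskFun, diskFun, if_pos hx, if_pos hy]
    gcongr
  · rw [diskFun, if_neg hy]
    exact diskFun_nonneg ha x

lemma setIntegral_eq_diskFun {a R : ℝ} (hR : 1 ≤ R) :
    ∫ k in Metric.closedBall (0 : EuclideanSpace ℝ (Fin 2)) R, 1 / (a + ‖k‖ ^ 2)
      = ∫ x : ℝ × ℝ, diskFun a R x := by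
  have e1 := EuclideanSpace.volume_preserving_symm_measurableEquiv_toLp (Fin 2)
  have e2 := volume_preserving_finTwoArrow ℝ
  have e := e2.comp e1
  have hemb : MeasurableEmbedding (⇑(MeasurableEquiv.finTwoArrow (α := ℝ)) ∘
      ⇑(MeasurableEquiv.toLp 2 (Fin 2 → ℝ)).symm) :=
    (MeasurableEquiv.measurableEmbedding _).comp (MeasurableEquiv.measurableEmbedding _)
  rw [← e.integral_comp hemb, ← integral_indicator Metric.isClosed_closedBall.measurableSet]
  congr 1
  ext k
  have hk : ‖k‖ ^ 2 = k 0 ^ 2 + k 1 ^ 2 := by simp [EuclideanSpace.norm_sq_eq]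
  have hiff : k ∈ Metric.closedBall (0 : EuclideanSpace ℝ (Fin 2)) R ↔
      k 0 ^ 2 + k 1 ^ 2 ≤ R ^ 2 := by
    rw [mem_closedBall_zero_iff, ← hk, sq_le_sq₀ (norm_nonneg _) (by linarith)]
  classical
  rw [Set.indicator_apply]
  simp only [hiff, hk]
  simp [diskFun]

lemma integrable_diskFun {a R : ℝ} (ha : 1 ≤ a) (hR : 1 ≤ R) : Integrable (diskFun a R) := by
  have hm : Measurable (diskFun a R) := by
    unfold diskFun
    refine Measurable.ite (measurableSet_le (by fun_prop) (by fun_prop)) (by fun_prop) (by fun_prop)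
  have hb : Integrable ((Set.Icc (-R) R ×ˢ Set.Icc (-R) R).indicator (fun _ : ℝ × ℝ => (1 : ℝ))) := by
    rw [integrable_indicator_iff (measurableSet_Icc.prod measurableSet_Icc)]
    refine integrableOn_const ?_
    exact (isCompact_Icc.prod isCompact_Icc).measure_lt_top.ne
  refine hb.mono' hm.aestronglyMeasurable (.of_forall fun x => ?_)
  rw [Real.norm_of_nonneg (diskFun_nonneg ha x)]
  by_cases hx : x.1 ^ 2 + x.2 ^ 2 ≤ R ^ 2
  · have h1 : |x.1| ≤ R := abs_le_of_sq_le_sq (by nlinarith) (by linarith)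
    have h2 : |x.2| ≤ R := abs_le_of_sq_le_sq (by nlinarith) (by linarith)
    have hmem : x ∈ Set.Icc (-R) R ×ˢ Set.Icc (-R) R := ⟨abs_le.1 h1, abs_le.1 h2⟩
    rw [Set.indicator_of_mem hmem, diskFun, if_pos hx]
    rw [div_le_one (by positivity)]
    nlinarith
  · rw [diskFun, if_neg hx]
    exact Set.indicator_nonneg (fun _ _ => zero_le_one) x

/-- A lattice point of the disk has coordinates at most `⌈R⌉`. -/
lemma le_ceil_of_mem {R : ℝ} (hR : 1 ≤ R) {m n : ℤ} (h : (m : ℝ) ^ 2 + (n : ℝ) ^ 2 ≤ R ^ 2) :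
    m ≤ ⌈R⌉ ∧ n ≤ ⌈R⌉ := by
  constructor <;>
  · rw [← Int.cast_le (R := ℝ)]
    refine le_trans ?_ (Int.le_ceil R)
    exact le_of_abs_le (abs_le_of_sq_le_sq (by nlinarith) (by linarith))

lemma quadrantSumPos_eq {a R : ℝ} (hR : 1 ≤ R) :
    quadrantSumPos a R = ∑ k ∈ Finset.Icc 1 ⌈R⌉ ×ˢ Finset.Icc 1 ⌈R⌉, diskFun a R (k.1, k.2) := by
  unfold quadrantSumPos
  rw [tsum_eq_sum (s := Finset.Icc 1 ⌈R⌉ ×ˢ Finset.Icc 1 ⌈R⌉)]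
  · refine Finset.sum_congr rfl fun k hk => ?_
    simp only [Finset.mem_product, Finset.mem_Icc] at hk
    have h1 : 0 < k.1 := by lia
    have h2 : 0 < k.2 := by lia
    simp [diskFun, h1, h2]
  · intro k hk
    refine if_neg fun h => hk ?_
    have := le_ceil_of_mem hR h.2.2
    simp only [Finset.mem_product, Finset.mem_Icc]
    lia

lemma quadrantSumNonneg_eq {a R : ℝ} (hR : 1 ≤ R) :
    quadrantSumNonneg a R =
      ∑ k ∈ Finset.Icc 0 ⌈R⌉ ×ˢ Finset.Icc 0 ⌈R⌉, diskFun a R (k.1, k.2) := by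
  unfold quadrantSumNonneg
  rw [tsum_eq_sum (s := Finset.Icc 0 ⌈R⌉ ×ˢ Finset.Icc 0 ⌈R⌉)]
  · refine Finset.sum_congr rfl fun k hk => ?_
    simp only [Finset.mem_product, Finset.mem_Icc] at hk
    simp [diskFun, hk.1.1, hk.2.1]
  · intro k hk
    refine if_neg fun h => hk ?_
    have := le_ceil_of_mem hR h.2.2
    simp only [Finset.mem_product, Finset.mem_Icc]
    lia

/-- For `a ≥ 1` and `R ≥ 1`, the open-quadrant lattice sum is bounded above by one
quarter of the integral of `1/(a + |k|²)` over the closed disk of radius `R` in `ℝ²`,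
which in turn is bounded above by the closed-quadrant lattice sum. -/
theorem stmt2 (a R : ℝ) (ha : 1 ≤ a) (hR : 1 ≤ R) :
    quadrantSumPos a R ≤
      (1 / 4) * ∫ k in Metric.closedBall (0 : EuclideanSpace ℝ (Fin 2)) R,
        1 / (a + ‖k‖ ^ 2) ∧
    (1 / 4) * (∫ k in Metric.closedBall (0 : EuclideanSpace ℝ (Fin 2)) R,
        1 / (a + ‖k‖ ^ 2)) ≤ quadrantSumNonneg a R := by
  rw [setIntegral_eq_diskFun hR, quadrantSumPos_eq hR, quadrantSumNonneg_eq hR]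
  have hF := integrable_diskFun ha hR
  constructor
  · obtain ⟨hi, he⟩ := integral_cells (fun x : ℝ => ⌈|x|⌉) (by fun_prop) (Finset.Icc 1 ⌈R⌉)
      (fun k => diskFun a R (k.1, k.2)) fun n hn => volume_ceil_abs n (Finset.mem_Icc.1 hn).1
    have := integral_mono hi hF fun x => by
      simp only [Finset.sum_ite_eq]
      split_ifs
      · exact diskFun_anti ha ((Int.le_ceil _).trans (le_abs_self _))
          ((Int.le_ceil _).trans (le_abs_self _))
      · exact diskFun_nonneg ha x
    linarith
  · obtain ⟨hi, he⟩ := integral_cells (fun x : ℝ => ⌊|x|⌋) (by fun_prop) (Finset.Icc 0 ⌈R⌉)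
      (fun k => diskFun a R (k.1, k.2)) fun n hn => volume_floor_abs n (Finset.mem_Icc.1 hn).1
    have := integral_mono hF hi fun x => by
      have hfl : ∀ t : ℝ, |((⌊|t|⌋ : ℤ) : ℝ)| ≤ |t| := fun t => by
        rw [abs_of_nonneg (by exact_mod_cast Int.floor_nonneg.2 (abs_nonneg t))]
        exact Int.floor_le _
      have hle : diskFun a R x ≤ diskFun a R (⌊|x.1|⌋, ⌊|x.2|⌋) :=
        diskFun_anti ha (hfl _) (hfl _)
      simp only [Finset.sum_ite_eq]
      split_ifs with h
      · exact hle
      · -- A label outside the box is outside the disk.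
        refine hle.trans (le_of_eq (if_neg fun hd => h ?_))
        have := le_ceil_of_mem hR hd
        have h1 := Int.floor_nonneg.2 (abs_nonneg x.1)
        have h2 := Int.floor_nonneg.2 (abs_nonneg x.2)
        simp only [Finset.mem_product, Finset.mem_Icc]
        exact ⟨⟨h1, this.1⟩, ⟨h2, this.2⟩⟩
    linarith
end

section
/- For all real numbers a ≥ 1 and R ≥ 1, the absolute value of the difference between the lattice sum S(a,R) = ∑_{k ∈ ℤ², |k| ≤ R} 1/(a + |k|²) and the integral ∫_{{k ∈ ℝ² : |k| ≤ R}} 1/(a + |k|²) dk is at most 4/a + 4·∫₀^R 1/(a + x²) dx. -/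
/-!
Let `g(x, y)` be `1/(a + x² + y²)` cut off to zero outside the disk of radius `R` (`diskKernel`).
It is nonnegative, even in each variable, and antitone in each variable on `[0, ∞)`.
Fix an integer `N > R`, so that `g` is supported in `[-N, N]²`, and put

* `J = ∫₀ᴺ ∫₀ᴺ g`, so that by symmetry the integral over the disk is `I = 4 J`;
* `Q = ∑_{1 ≤ i, j ≤ N} g(i, j)`, `P = ∑_{0 ≤ i, j ≤ N} g(i, j)`, `B = ∑_{1 ≤ i ≤ N} g(i, 0)`.

Splitting the lattice points into the origin, the axes and the open quadrants gives
`S = 4 Q + 4 B + 1/a` and `P = Q + 2 B + 1/a`. Comparing sums with integrals of antitone functions,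
once in each variable, gives `Q ≤ J ≤ P`, and in one variable `B ≤ ∫₀ᴿ 1/(a + x²) dx`. Hence
`-(4 B + 3/a) ≤ S - I ≤ 4 B + 1/a`, which implies the claim.
-/

open Real Filter Set MeasureTheory

/-- The function `1/(a + x² + y²)` on the closed disk of radius `R`, extended by zero. -/
noncomputable def diskKernel (a R x y : ℝ) : ℝ :=
  if x ^ 2 + y ^ 2 ≤ R ^ 2 then 1 / (a + (x ^ 2 + y ^ 2)) else 0

lemma diskKernel_nonneg {a : ℝ} (ha : 1 ≤ a) (R x y : ℝ) : 0 ≤ diskKernel a R x y := by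
  unfold diskKernel
  split_ifs
  · positivity
  · exact le_rfl

lemma diskKernel_comm (a R x y : ℝ) : diskKernel a R x y = diskKernel a R y x := by
  simp only [diskKernel, add_comm (x ^ 2)]

lemma diskKernel_le_one {a : ℝ} (ha : 1 ≤ a) (R x y : ℝ) : diskKernel a R x y ≤ 1 := by
  unfold diskKernel
  split_ifs
  · rw [div_le_one (by positivity)]
    nlinarith [sq_nonneg x, sq_nonneg y]
  · exact zero_le_one

lemma diskKernel_abs_right (a R x y : ℝ) : diskKernel a R x |y| = diskKernel a R x y := by
  simp [diskKernel]

lemma diskKernel_abs_left (a R x y : ℝ) : diskKernel a R |x| y = diskKernel a R x y := by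
  simp [diskKernel]

lemma diskKernel_eq_zero {a R x y : ℝ} (hR : 1 ≤ R) (hy : R < |y|) : diskKernel a R x y = 0 := by
  unfold diskKernel
  rw [if_neg]
  have : R ^ 2 < y ^ 2 := by
    rw [← sq_abs y]
    gcongr
  nlinarith [sq_nonneg x]

lemma diskKernel_antitone {a : ℝ} (ha : 1 ≤ a) (R x : ℝ) :
    AntitoneOn (fun y => diskKernel a R x y) (Ici 0) := by
  intro y hy z hz hyz
  have h : y ^ 2 ≤ z ^ 2 := pow_le_pow_left₀ hy hyz 2
  by_cases hz' : x ^ 2 + z ^ 2 ≤ R ^ 2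
  · have hy' : x ^ 2 + y ^ 2 ≤ R ^ 2 := by linarith
    simp only [diskKernel, hz', hy', if_true]
    gcongr
  · simpa [diskKernel, hz'] using diskKernel_nonneg ha R x y

lemma diskKernel_measurable (a R : ℝ) :
    Measurable (fun p : ℝ × ℝ => diskKernel a R p.1 p.2) := by
  unfold diskKernel
  refine Measurable.ite (measurableSet_le (by fun_prop) (by fun_prop)) ?_ measurable_const
  fun_prop

lemma diskKernel_integrable {a R : ℝ} (ha : 1 ≤ a) (hR : 1 ≤ R) :
    Integrable (fun p : ℝ × ℝ => diskKernel a R p.1 p.2) := by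
  have hs : Function.support (fun p : ℝ × ℝ => diskKernel a R p.1 p.2)
      ⊆ Icc (-R) R ×ˢ Icc (-R) R := by
    intro p hp
    rw [Function.mem_support] at hp
    refine ⟨abs_le.1 (not_lt.1 fun h => hp ?_), abs_le.1 (not_lt.1 fun h => hp ?_)⟩
    · rw [diskKernel_comm]
      exact diskKernel_eq_zero hR h
    · exact diskKernel_eq_zero hR h
  rw [← integrableOn_iff_integrable_of_support_subset hs]
  refine Measure.integrableOn_of_bounded (M := 1)
    (isCompact_Icc.prod isCompact_Icc).measure_lt_top.ne
    (diskKernel_measurable a R).aestronglyMeasurable (ae_of_all _ fun p => ?_)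
  rw [Real.norm_of_nonneg (diskKernel_nonneg ha _ _ _)]
  exact diskKernel_le_one ha _ _ _

/-- An even function on `ℝ` vanishing beyond `N` has integral `2 ∫₀ᴺ`. -/
lemma integral_even_eq {f : ℝ → ℝ} {N : ℝ} (hN : 0 ≤ N) (hf : ∀ x, f |x| = f x)
    (h0 : ∀ x, N < x → f x = 0) : ∫ x, f x = 2 * ∫ x in (0 : ℝ)..N, f x := by
  have h1 : ∫ x, f x = ∫ x, f |x| := by simp only [hf]
  rw [h1, integral_comp_abs, intervalIntegral.integral_of_le hN]
  congr 1
  refine setIntegral_eq_of_subset_of_forall_sdiff_eq_zero measurableSet_Ioi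
    (fun x hx => hx.1) fun x hx => h0 x ?_
  by_contra h
  exact hx.2 ⟨hx.1, not_lt.1 h⟩

/-- Fubini and the evenness of the kernel reduce the disk integral to one quadrant. -/
lemma disk_integral_eq {a R N : ℝ} (ha : 1 ≤ a) (hR : 1 ≤ R) (hN : R < N) :
    ∫ k in Metric.closedBall (0 : EuclideanSpace ℝ (Fin 2)) R, 1 / (a + ‖k‖ ^ 2) =
      4 * ∫ x in (0 : ℝ)..N, ∫ y in (0 : ℝ)..N, diskKernel a R x y := by
  have hN0 : 0 ≤ N := by linarith
  have hmp := (volume_preserving_finTwoArrow ℝ).comp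
    (EuclideanSpace.volume_preserving_symm_measurableEquiv_toLp (Fin 2))
  have hcoord : ∫ k in Metric.closedBall (0 : EuclideanSpace ℝ (Fin 2)) R, 1 / (a + ‖k‖ ^ 2) =
      ∫ p : ℝ × ℝ, diskKernel a R p.1 p.2 := by
    rw [← hmp.integral_comp (((MeasurableEquiv.toLp 2 (Fin 2 → ℝ)).symm.trans
      MeasurableEquiv.finTwoArrow).measurableEmbedding),
      ← integral_indicator Metric.isClosed_closedBall.measurableSet]
    congr 1
    ext k
    have hk : ‖k‖ ^ 2 = k 0 ^ 2 + k 1 ^ 2 := by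
      simp [EuclideanSpace.norm_sq_eq, Fin.sum_univ_two]
    have hiff : k ∈ Metric.closedBall (0 : EuclideanSpace ℝ (Fin 2)) R ↔
        k 0 ^ 2 + k 1 ^ 2 ≤ R ^ 2 := by
      rw [mem_closedBall_zero_iff, ← hk, sq_le_sq₀ (norm_nonneg _) (by linarith)]
    change _ = diskKernel a R (k 0) (k 1)
    simp only [indicator, hiff, hk, diskKernel]
  have hinner : ∀ x, ∫ y, diskKernel a R x y = 2 * ∫ y in (0 : ℝ)..N, diskKernel a R x y :=
    fun x => integral_even_eq hN0 (diskKernel_abs_right a R x)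
      fun y hy => diskKernel_eq_zero hR ((hN.trans hy).trans_le (le_abs_self y))
  rw [hcoord, Measure.volume_eq_prod, integral_prod _ (diskKernel_integrable ha hR)]
  simp only [hinner]
  rw [integral_const_mul, integral_even_eq hN0]
  · ring
  · intro x
    simp only [diskKernel_abs_left]
  · intro x hx
    simp only [diskKernel_comm a R x,
      diskKernel_eq_zero hR ((hN.trans hx).trans_le (le_abs_self x)),
      intervalIntegral.integral_zero]

/-- Splitting of the lattice points into open quadrants, half-axes and the origin. -/
lemma latticeSum_eq_s3 {a R : ℝ} {N : ℕ} (hR : 1 ≤ R) (hN : R < N) :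
    latticeSum a R = 4 * ∑ i ∈ Finset.range N, ∑ j ∈ Finset.range N,
        diskKernel a R ((i + 1 : ℕ) : ℝ) ((j + 1 : ℕ) : ℝ) +
      4 * ∑ i ∈ Finset.range N, diskKernel a R ((i + 1 : ℕ) : ℝ) 0 + diskKernel a R 0 0 := by
  have hz : ∀ z : ℤ, z ∉ Finset.Icc (-N : ℤ) N → R < |(z : ℝ)| := by
    intro z hz
    have h1 : (N : ℤ) < |z| := by
      rw [Finset.mem_Icc, ← abs_le] at hz
      exact not_le.1 hz
    have h2 : (N : ℝ) < |(z : ℝ)| := by exact_mod_cast h1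
    exact hN.trans h2
  have hfin : latticeSum a R = ∑ i ∈ Finset.Icc (-N : ℤ) N, ∑ j ∈ Finset.Icc (-N : ℤ) N,
      diskKernel a R i j := by
    rw [← Finset.sum_product']
    refine tsum_eq_sum fun k hk => ?_
    change diskKernel a R k.1 k.2 = 0
    rw [Finset.mem_product, not_and_or] at hk
    rcases hk with hk | hk
    · rw [diskKernel_comm]
      exact diskKernel_eq_zero hR (hz _ hk)
    · exact diskKernel_eq_zero hR (hz _ hk)
  have hj : ∀ x : ℝ, ∑ j ∈ Finset.Icc (-N : ℤ) N, diskKernel a R x j =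
      2 * ∑ j ∈ Finset.range N, diskKernel a R x ((j + 1 : ℕ) : ℝ) + diskKernel a R x 0 := by
    intro x
    rw [Finset.sum_Icc_of_even_eq_range (f := fun j : ℤ => diskKernel a R x j)
      (fun j => by simp [diskKernel]), Finset.sum_range_succ']
    simp
    ring
  rw [hfin]
  simp only [hj]
  rw [Finset.sum_Icc_of_even_eq_range
    (f := fun i : ℤ => 2 * ∑ j ∈ Finset.range N, diskKernel a R i ((j + 1 : ℕ) : ℝ) +
      diskKernel a R i 0) (fun j => by simp [diskKernel]), Finset.sum_range_succ']
  simp only [Finset.sum_add_distrib, ← Finset.mul_sum, Int.cast_natCast, Int.cast_zero,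
    Nat.cast_zero, nsmul_eq_mul, Nat.cast_ofNat, diskKernel_comm a R 0 (((_ : ℕ) + 1 : ℕ) : ℝ)]
  ring

/-- Each half-axis contributes at most the one-dimensional integral; truncating at `R` is harmless
because the kernel vanishes on `(R, N]`. -/
lemma axis_sum_le {a R : ℝ} {N : ℕ} (ha : 1 ≤ a) (hR : 1 ≤ R) (hN : R < N) :
    ∑ i ∈ Finset.range N, diskKernel a R ((i + 1 : ℕ) : ℝ) 0 ≤
      ∫ x in (0 : ℝ)..R, 1 / (a + x ^ 2) := by
  have hanti : AntitoneOn (fun x => diskKernel a R 0 x) (Icc 0 (0 + (N : ℝ))) :=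
    (diskKernel_antitone ha R 0).mono Icc_subset_Ici_self
  have h := hanti.sum_le_integral
  simp only [zero_add] at h
  simp only [diskKernel_comm a R _ 0]
  refine h.trans_eq ?_
  rw [intervalIntegral.integral_of_le (by positivity),
    intervalIntegral.integral_of_le (by linarith),
    setIntegral_eq_of_subset_of_forall_sdiff_eq_zero measurableSet_Ioc
      (Ioc_subset_Ioc_right hN.le : Ioc 0 R ⊆ Ioc 0 (N : ℝ))]
  · refine setIntegral_congr_fun measurableSet_Ioc fun x hx => ?_
    have : x ^ 2 ≤ R ^ 2 := pow_le_pow_left₀ hx.1.le hx.2 2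
    simp [diskKernel, this]
  · intro x hx
    refine diskKernel_eq_zero hR (lt_of_lt_of_le ?_ (le_abs_self x))
    by_contra h'
    exact hx.2 ⟨hx.1.1, not_lt.1 h'⟩

lemma inner_integral_antitone {a : ℝ} (ha : 1 ≤ a) (R : ℝ) (N : ℕ) :
    AntitoneOn (fun x => ∫ y in (0 : ℝ)..N, diskKernel a R x y) (Ici 0) := by
  have hint : ∀ x, IntervalIntegrable (fun y => diskKernel a R x y) volume 0 N := fun x =>
    ((diskKernel_antitone ha R x).mono
      (by rw [uIcc_of_le (by positivity)]; exact Icc_subset_Ici_self)).intervalIntegrable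
  intro x hx z hz hxz
  refine intervalIntegral.integral_mono_on (by positivity) (hint z) (hint x) fun y _ => ?_
  rw [diskKernel_comm a R z, diskKernel_comm a R x]
  exact diskKernel_antitone ha R y hx hz hxz

lemma quadrant_sum_le {a : ℝ} (ha : 1 ≤ a) (R : ℝ) (N : ℕ) :
    ∑ i ∈ Finset.range N, ∑ j ∈ Finset.range N,
        diskKernel a R ((i + 1 : ℕ) : ℝ) ((j + 1 : ℕ) : ℝ) ≤
      ∫ x in (0 : ℝ)..N, ∫ y in (0 : ℝ)..N, diskKernel a R x y := by
  have h2 := AntitoneOn.sum_le_integral (x₀ := 0) (a := N)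
    ((inner_integral_antitone ha R N).mono Icc_subset_Ici_self)
  simp only [zero_add] at h2
  refine le_trans (Finset.sum_le_sum fun i _ => ?_) h2
  have h1 := AntitoneOn.sum_le_integral (x₀ := 0) (a := N)
    ((diskKernel_antitone ha R ((i + 1 : ℕ) : ℝ)).mono Icc_subset_Ici_self)
  simpa only [zero_add] using h1

lemma le_quadrant_sum {a : ℝ} (ha : 1 ≤ a) (R : ℝ) (N : ℕ) :
    ∫ x in (0 : ℝ)..N, ∫ y in (0 : ℝ)..N, diskKernel a R x y ≤
      ∑ i ∈ Finset.range (N + 1), ∑ j ∈ Finset.range (N + 1), diskKernel a R i j := by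
  have h2 := AntitoneOn.integral_le_sum (x₀ := 0) (a := N)
    ((inner_integral_antitone ha R N).mono Icc_subset_Ici_self)
  simp only [zero_add] at h2
  have h3 : ∀ i : ℕ, ∫ y in (0 : ℝ)..N, diskKernel a R i y ≤
      ∑ j ∈ Finset.range (N + 1), diskKernel a R i j := by
    intro i
    have h1 := AntitoneOn.integral_le_sum (x₀ := 0) (a := N)
      ((diskKernel_antitone ha R i).mono Icc_subset_Ici_self)
    simp only [zero_add] at h1
    rw [Finset.sum_range_succ]
    linarith [diskKernel_nonneg ha R i N]
  refine h2.trans ((Finset.sum_le_sum fun i _ => h3 i).trans ?_)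
  rw [Finset.sum_range_succ _ N]
  exact le_add_of_nonneg_right (Finset.sum_nonneg fun j _ => diskKernel_nonneg ha _ _ _)

lemma quadrant_sum_eq (a R : ℝ) (N : ℕ) :
    ∑ i ∈ Finset.range (N + 1), ∑ j ∈ Finset.range (N + 1), diskKernel a R i j =
      ∑ i ∈ Finset.range N, ∑ j ∈ Finset.range N,
        diskKernel a R ((i + 1 : ℕ) : ℝ) ((j + 1 : ℕ) : ℝ) +
      2 * ∑ i ∈ Finset.range N, diskKernel a R ((i + 1 : ℕ) : ℝ) 0 + diskKernel a R 0 0 := by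
  simp only [Finset.sum_range_succ', Finset.sum_add_distrib, Nat.cast_zero,
    diskKernel_comm a R 0 (((_ : ℕ) + 1 : ℕ) : ℝ)]
  ring

/-- For `a ≥ 1` and `R ≥ 1`, the difference between the lattice sum `S(a,R)` and the
integral of `1/(a + |k|²)` over the closed disk of radius `R` in `ℝ²` is bounded in
absolute value by `4/a + 4·∫₀^R 1/(a + x²) dx`. -/
theorem stmt3 (a R : ℝ) (ha : 1 ≤ a) (hR : 1 ≤ R) :
    |latticeSum a R -
      ∫ k in Metric.closedBall (0 : EuclideanSpace ℝ (Fin 2)) R, 1 / (a + ‖k‖ ^ 2)| ≤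
      4 / a + 4 * ∫ x in (0 : ℝ)..R, 1 / (a + x ^ 2) := by
  obtain ⟨N, hN⟩ := exists_nat_gt R
  have h00 : diskKernel a R 0 0 = 1 / a := by
    simp [diskKernel, sq_nonneg]
  have hlow := le_quadrant_sum ha R N
  have hup := quadrant_sum_le ha R N
  have hB := axis_sum_le ha hR hN
  have hpos : 0 ≤ 1 / a := by positivity
  have h4 : 4 / a = 4 * (1 / a) := by ring
  rw [quadrant_sum_eq, h00] at hlow
  rw [latticeSum_eq_s3 hR hN, disk_integral_eq ha hR hN, h00, h4, abs_le]
  constructor <;> linarith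
end

section
/- For every real number σ > 0 and every real number R ≥ 0, the equation C = (3/(8π²))·∑_{k ∈ ℤ², |k| ≤ R} σ²/(C − 1 + |k|²) has exactly one solution C in the interval (1, ∞). -/
/-!
With `a = C - 1` the equation reads `a + 1 = c * ∑ 1 / (a + |k|²)` over a finite set of lattice
points, where `c = 3σ²/(8π²) > 0`. On `(0, ∞)` the right side is continuous and nonincreasing while
the left side is strictly increasing, so there is at most one solution. The `k = 0` term makes the
right side at least `c / a`, which exceeds `a + 1` for small `a`, and the right side is at most
`c * N / a`, where `N` is the number of terms, so it is below `a + 1` for large `a`. The intermediate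
value theorem then gives a solution (`existsUnique_shifted_eq`).
-/

open Real Filter Set MeasureTheory

/-- The abstract form of the fixed-point equation: the `|k|²` are replaced by nonnegative reals
`q i`, at least one of which vanishes. -/
theorem existsUnique_shifted_eq {ι : Type*} (s : Finset ι) (q : ι → ℝ) (hq : ∀ i, 0 ≤ q i)
    (i₀ : ι) (hi₀ : i₀ ∈ s) (hq₀ : q i₀ = 0) (c : ℝ) (hc : 0 < c) :
    ∃! a : ℝ, 0 < a ∧ a + 1 = c * ∑ i ∈ s, 1 / (a + q i) := by
  have anti : ∀ a b : ℝ, 0 < a → a ≤ b →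
      c * ∑ i ∈ s, 1 / (b + q i) ≤ c * ∑ i ∈ s, 1 / (a + q i) := by
    intro a b ha hab
    refine mul_le_mul_of_nonneg_left (Finset.sum_le_sum fun i _ => ?_) hc.le
    exact one_div_le_one_div_of_le (by linarith [hq i]) (by linarith)
  have ha₀ : 0 < min 1 (c / 2) := lt_min one_pos (by linarith)
  set a₀ := min 1 (c / 2)
  set a₁ := max 1 (c * s.card)
  have h01 : a₀ ≤ a₁ := (min_le_left _ _).trans (le_max_left _ _)
  have ha₁ : 0 < a₁ := ha₀.trans_le h01
  -- At `a₀` the vanishing `q i₀` alone contributes `c / a₀ ≥ 2 ≥ a₀ + 1`.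
  have low : a₀ + 1 ≤ c * ∑ i ∈ s, 1 / (a₀ + q i) := by
    have h1 : 1 / a₀ ≤ ∑ i ∈ s, 1 / (a₀ + q i) := by
      have := Finset.single_le_sum (f := fun i => 1 / (a₀ + q i))
        (fun i _ => by have := hq i; positivity) hi₀
      simpa [hq₀] using this
    have h2 : 2 ≤ c * (1 / a₀) := by
      rw [mul_one_div, le_div_iff₀ ha₀]
      linarith [min_le_right 1 (c / 2)]
    have h3 := mul_le_mul_of_nonneg_left h1 hc.le
    linarith [min_le_left 1 (c / 2)]
  -- At `a₁` every term is at most `1 / a₁`, so the right side is at most `c * #s / a₁ ≤ 1`.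
  have high : c * ∑ i ∈ s, 1 / (a₁ + q i) ≤ a₁ + 1 := by
    have h1 : ∑ i ∈ s, 1 / (a₁ + q i) ≤ s.card * (1 / a₁) := by
      rw [← nsmul_eq_mul]
      exact Finset.sum_le_card_nsmul _ _ _ fun i _ =>
        one_div_le_one_div_of_le ha₁ (by linarith [hq i])
    have h2 : c * (s.card * (1 / a₁)) ≤ 1 := by
      rw [← mul_assoc, mul_one_div, div_le_one ha₁]
      exact le_max_right _ _
    have h3 := mul_le_mul_of_nonneg_left h1 hc.le
    linarith
  have cont : ContinuousOn (fun a : ℝ => a + 1 - c * ∑ i ∈ s, 1 / (a + q i)) (Set.Icc a₀ a₁) := by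
    refine ContinuousOn.sub (by fun_prop) (ContinuousOn.mul (by fun_prop) ?_)
    refine continuousOn_finsetSum _ fun i _ => ContinuousOn.div (by fun_prop) (by fun_prop) ?_
    intro a ha
    have := hq i
    have := ha.1
    exact ne_of_gt (by linarith)
  obtain ⟨a, ha, hfa⟩ := intermediate_value_Icc h01 cont
    (show (0 : ℝ) ∈ Set.Icc _ _ from ⟨by linarith, by linarith⟩)
  refine ⟨a, ⟨ha₀.trans_le ha.1, by simp only at hfa; linarith⟩, ?_⟩
  rintro b ⟨hb, hfb⟩
  simp only at hfa
  have ha' := ha₀.trans_le ha.1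
  rcases le_total a b with h | h
  · linarith [anti a b ha' h]
  · linarith [anti b a hb h]

theorem finite_latticeDisc (R : ℝ) :
    {k : ℤ × ℤ | (k.1 : ℝ) ^ 2 + (k.2 : ℝ) ^ 2 ≤ R ^ 2}.Finite := by
  refine ((Set.finite_Icc (-⌈|R|⌉) ⌈|R|⌉).prod (Set.finite_Icc (-⌈|R|⌉) ⌈|R|⌉)).subset ?_
  have key : ∀ m : ℤ, (m : ℝ) ^ 2 ≤ R ^ 2 → m ∈ Set.Icc (-⌈|R|⌉) ⌈|R|⌉ := by
    intro m hm
    have h := abs_le.1 ((sq_le_sq.1 hm).trans (Int.le_ceil |R|))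
    exact ⟨by exact_mod_cast h.1, by exact_mod_cast h.2⟩
  rintro k hk
  simp only [Set.mem_setOf_eq] at hk
  exact ⟨key _ (by nlinarith [sq_nonneg (k.2 : ℝ)]), key _ (by nlinarith [sq_nonneg (k.1 : ℝ)])⟩

theorem latticeSum_eq_sum (a R : ℝ) :
    latticeSum a R = ∑ k ∈ (finite_latticeDisc R).toFinset,
      1 / (a + ((k.1 : ℝ) ^ 2 + (k.2 : ℝ) ^ 2)) := by
  unfold latticeSum
  rw [tsum_eq_sum (s := (finite_latticeDisc R).toFinset)]
  · refine Finset.sum_congr rfl fun k hk => if_pos ?_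
    simpa using hk
  · intro k hk
    refine if_neg ?_
    simpa using hk

/-- For every `σ > 0` and `R ≥ 0`, the equation
`C = (3/(8π²))·∑_{|k| ≤ R} σ²/(C − 1 + |k|²)` has exactly one solution `C ∈ (1, ∞)`.
Note `∑_{|k| ≤ R} σ²/(C − 1 + |k|²) = σ² · S(C−1, R)`. -/
theorem stmt5 (σ R : ℝ) (hσ : 0 < σ) (hR : 0 ≤ R) :
    ∃! C : ℝ, 1 < C ∧
      C = 3 / (8 * π ^ 2) * (σ ^ 2 * latticeSum (C - 1) R) := by
  obtain ⟨a, ⟨ha, hfa⟩, huniq⟩ := existsUnique_shifted_eq (finite_latticeDisc R).toFinset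
    (fun k : ℤ × ℤ => (k.1 : ℝ) ^ 2 + (k.2 : ℝ) ^ 2) (fun k => by positivity) (0, 0)
    (by simpa using sq_nonneg R) (by simp) (3 / (8 * π ^ 2) * σ ^ 2) (by positivity)
  refine ⟨a + 1, ⟨by linarith, ?_⟩, ?_⟩
  · rw [latticeSum_eq_sum, add_sub_cancel_right, ← mul_assoc]
    exact hfa
  · rintro C ⟨hC, hfC⟩
    rw [latticeSum_eq_sum, ← mul_assoc] at hfC
    have := huniq (C - 1) ⟨by linarith, by rw [sub_add_cancel]; exact hfC⟩
    linarith
end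

section
/- Let σ : (0,1) → (0,∞) be bounded with lim_{ε→0} σ(ε)²·log(1/ε) = +∞, and for each ε ∈ (0,1) let C_ε > 1 be the unique solution of C_ε = (3/(8π²))·∑_{|k| ≤ 1/ε} σ(ε)²/(C_ε − 1 + |k|²). Then C_ε / ((3/(4π))·σ(ε)²·log(1/ε)) → 1 as ε → 0; in particular lim_{ε→0} C_ε = +∞. -/
/-!
The equation reads `C = (3/(8π²)) σ² S(C - 1, R)` with `R = 1/ε`, so everything rests on
`S(a, R) = 2π log R + O(1 + log a)` for `a ≥ 1`. More precisely, `latticeSum_le` gives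
`S(a, R) ≤ 2π log R + 20` and `le_latticeSum` gives `S(a, R) ≥ 2π log R - π log A - 20` whenever
`0 < a ≤ A` and `1 ≤ A`. Both come from comparing the disc with a square and summing row by row:
with `b = √(a + m²)`, the row `∑ₙ 1/(b² + n²)` is `π/b` up to a bounded total error (comparison
with `arctan`), and `∑_{|m| ≤ N} 1/√(a + m²)` is `2 log N` up to `log a + O(1)`.

If `C` stayed below `K`, the lower bound with `A = max K 1` would make it exceed
`(3/(4π)) σ² log R - O(1)`, which is unbounded; so `C → ∞`. Then `C - 1 ≥ 1` eventually, the upper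
bound gives `C ≤ (3/(4π)) σ² log R (1 + O(1/log R))`, in particular `log C = O(log log R)` since
`σ` is bounded, and the lower bound with `A = C - 1` gives the matching estimate from below.
-/

open Real Filter Set MeasureTheory

lemma arctan_sub_le {x y : ℝ} (hx : 0 ≤ x) (hxy : x < y) :
    arctan y - arctan x ≤ (y - x) / (1 + x ^ 2) := by
  obtain ⟨c, hc, h⟩ := exists_hasDerivAt_eq_slope arctan (fun x => 1 / (1 + x ^ 2)) hxy
    continuous_arctan.continuousOn (fun x _ => hasDerivAt_arctan x)
  have hd : 0 < y - x := sub_pos.2 hxy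
  have h1 : arctan y - arctan x = (y - x) * (1 / (1 + c ^ 2)) := by
    rw [h]; field_simp
  rw [h1, div_eq_mul_one_div (y - x)]
  have := hc.1.le
  gcongr

lemma le_arctan_sub {x y : ℝ} (hx : 0 ≤ x) (hxy : x < y) :
    (y - x) / (1 + y ^ 2) ≤ arctan y - arctan x := by
  obtain ⟨c, hc, h⟩ := exists_hasDerivAt_eq_slope arctan (fun x => 1 / (1 + x ^ 2)) hxy
    continuous_arctan.continuousOn (fun x _ => hasDerivAt_arctan x)
  have hd : 0 < y - x := sub_pos.2 hxy
  have h1 : arctan y - arctan x = (y - x) * (1 / (1 + c ^ 2)) := by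
    rw [h]; field_simp
  rw [h1, div_eq_mul_one_div (y - x)]
  have := hc.2.le
  have : 0 ≤ c := hx.trans hc.1.le
  gcongr

lemma pi_div_two_sub_inv_le_arctan {x : ℝ} (hx : 0 < x) : π / 2 - x⁻¹ ≤ arctan x := by
  have h1 := arctan_inv_of_pos hx
  have h2 := arctan_sub_le le_rfl (inv_pos.2 hx)
  simp at h2
  linarith

/-- The right-endpoint Riemann sum is at most `∫₀ᴺ dx/(b²+x²) = arctan(N/b)/b`. -/
lemma sum_shift_le_arctan {b : ℝ} (hb : 0 < b) (N : ℕ) :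
    ∑ n ∈ Finset.range N, 1 / (b ^ 2 + ((n : ℝ) + 1) ^ 2) ≤ arctan (N / b) / b := by
  induction N with
  | zero => simp
  | succ N ih =>
    rw [Finset.sum_range_succ]
    have h := le_arctan_sub (x := N / b) (y := (N + 1) / b) (by positivity) (by gcongr; linarith)
    have e : (((N : ℝ) + 1) / b - N / b) / (1 + (((N : ℝ) + 1) / b) ^ 2)
        = b * (1 / (b ^ 2 + ((N : ℝ) + 1) ^ 2)) := by
      field_simp; ring
    rw [e] at h
    have h2 : 1 / (b ^ 2 + ((N : ℝ) + 1) ^ 2) ≤ (arctan ((N + 1) / b) - arctan (N / b)) / b := by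
      rw [le_div_iff₀ hb]; linarith
    push_cast
    rw [sub_div] at h2
    linarith

/-- The left-endpoint Riemann sum is at least `∫₀ᴺ dx/(b²+x²) = arctan(N/b)/b`. -/
lemma arctan_le_sum {b : ℝ} (hb : 0 < b) (N : ℕ) :
    arctan (N / b) / b ≤ ∑ n ∈ Finset.range N, 1 / (b ^ 2 + (n : ℝ) ^ 2) := by
  induction N with
  | zero => simp
  | succ N ih =>
    rw [Finset.sum_range_succ]
    have h := arctan_sub_le (x := N / b) (y := (N + 1) / b) (by positivity) (by gcongr; linarith)
    have e : (((N : ℝ) + 1) / b - N / b) / (1 + ((N : ℝ) / b) ^ 2)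
        = b * (1 / (b ^ 2 + (N : ℝ) ^ 2)) := by
      field_simp; ring
    rw [e] at h
    have h2 : (arctan ((N + 1) / b) - arctan (N / b)) / b ≤ 1 / (b ^ 2 + (N : ℝ) ^ 2) := by
      rw [div_le_iff₀ hb]; linarith
    push_cast
    rw [sub_div] at h2
    linarith

/-- A truncated row of the lattice sum is at most `∫_ℝ dx/(b²+x²) = π/b` plus its central term. -/
lemma row_le {b : ℝ} (hb : 0 < b) (N : ℕ) :
    ∑ n ∈ Finset.Icc (-N : ℤ) N, 1 / (b ^ 2 + (n : ℝ) ^ 2) ≤ π / b + 1 / b ^ 2 := by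
  rw [Finset.sum_Icc_of_even_eq_range (fun n => by simp), Finset.sum_range_succ']
  have h := sum_shift_le_arctan hb N
  have h2 : arctan (N / b) / b ≤ (π / 2) / b := by
    gcongr; exact (arctan_lt_pi_div_two _).le
  have h3 : π / b = 2 * ((π / 2) / b) := by ring
  simp only [Int.cast_natCast, Nat.cast_add, Nat.cast_one, Nat.cast_zero, Int.cast_zero,
    nsmul_eq_mul, Nat.cast_ofNat, Int.cast_add, Int.cast_one] at *
  norm_num at *
  linarith

/-- A truncated row is at least `π/b` minus its central term and the integral tail bound
`2/(N+1)`. -/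
lemma le_row {b : ℝ} (hb : 0 < b) (N : ℕ) :
    π / b - 2 / (N + 1) - 1 / b ^ 2 ≤
      ∑ n ∈ Finset.Icc (-N : ℤ) N, 1 / (b ^ 2 + (n : ℝ) ^ 2) := by
  rw [Finset.sum_Icc_of_even_eq_range (fun n => by simp)]
  have h := arctan_le_sum hb (N + 1)
  have h2 : (π / 2 - (((N + 1 : ℕ) : ℝ) / b)⁻¹) / b ≤ arctan ((N + 1 : ℕ) / b) / b := by
    gcongr; exact pi_div_two_sub_inv_le_arctan (by positivity)
  have h3 : (π / 2 - (((N + 1 : ℕ) : ℝ) / b)⁻¹) / b = π / b / 2 - 1 / (N + 1) := by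
    push_cast; field_simp
  rw [h3] at h2
  have h4 : (2 : ℝ) / (N + 1) = 2 * (1 / (N + 1)) := by ring
  simp only [Int.cast_natCast, nsmul_eq_mul, Nat.cast_ofNat, Int.cast_zero, ne_eq,
    OfNat.ofNat_ne_zero, not_false_eq_true, zero_pow, add_zero]
  rw [h4]
  linarith

lemma sum_inv_one_add_sq_le (N : ℕ) :
    ∑ m ∈ Finset.Icc (-N : ℤ) N, 1 / (1 + (m : ℝ) ^ 2) ≤ 5 := by
  have h := row_le one_pos N
  norm_num at *
  linarith [pi_lt_four]

lemma sum_inv_sqrt_le (N : ℕ) :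
    ∑ m ∈ Finset.Icc (-N : ℤ) N, 1 / √(1 + (m : ℝ) ^ 2) ≤ 2 * log N + 3 := by
  rw [Finset.sum_Icc_of_even_eq_range (fun n => by simp), Finset.sum_range_succ']
  have h : ∑ i ∈ Finset.range N, 1 / √(1 + ((((i + 1 : ℕ) : ℤ)) : ℝ) ^ 2) ≤ 1 + log N := by
    refine le_trans ?_ (harmonic_le_one_add_log N)
    rw [harmonic]
    push_cast
    refine Finset.sum_le_sum fun i _ => ?_
    rw [one_div]
    gcongr
    exact Real.le_sqrt_of_sq_le (by linarith)
  rw [smul_add, nsmul_eq_mul, nsmul_eq_mul]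
  norm_num at *
  linarith

/-- Uses `√(a+m²) ≤ √a + |m|` and telescoping of `log (√a + m)`. -/
lemma le_sum_inv_sqrt {a : ℝ} (ha : 1 ≤ a) (N : ℕ) :
    2 * log (N + 1) - log a - 1 ≤ ∑ m ∈ Finset.Icc (-N : ℤ) N, 1 / √(a + (m : ℝ) ^ 2) := by
  rw [Finset.sum_Icc_of_even_eq_range (fun n => by simp)]
  have hs : 1 ≤ √a := Real.one_le_sqrt.2 ha
  have tele : ∀ M : ℕ, log (√a + M) - log √a ≤ ∑ i ∈ Finset.range M, 1 / (√a + i) := by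
    intro M
    induction M with
    | zero => simp
    | succ M ih =>
      rw [Finset.sum_range_succ]
      have hp : 0 < √a + M := by positivity
      have h := Real.log_le_sub_one_of_pos (x := (√a + (M + 1 : ℕ)) / (√a + M)) (by positivity)
      rw [Real.log_div (by positivity) hp.ne'] at h
      have e : (√a + (M + 1 : ℕ)) / (√a + M) - 1 = 1 / (√a + M) := by
        push_cast; field_simp; ring
      linarith
  have h1 : ∑ i ∈ Finset.range (N + 1), 1 / (√a + i)
      ≤ ∑ i ∈ Finset.range (N + 1), 1 / √(a + ((i : ℤ) : ℝ) ^ 2) := by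
    refine Finset.sum_le_sum fun i _ => ?_
    have : 0 < √(a + ((i : ℤ) : ℝ) ^ 2) := by positivity
    gcongr
    rw [Real.sqrt_le_left (by positivity)]
    push_cast
    nlinarith [Real.sq_sqrt (zero_le_one.trans ha), mul_nonneg (Real.sqrt_nonneg a) i.cast_nonneg]
  have h2 := tele (N + 1)
  have h3 : log (N + 1) ≤ log (√a + (N + 1 : ℕ)) := by
    apply Real.log_le_log (by positivity)
    push_cast; linarith
  have h4 : log √a = log a / 2 := Real.log_sqrt (by linarith)
  have h5 : 1 / √a ≤ 1 := by rw [div_le_one (by positivity)]; exact hs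
  rw [nsmul_eq_mul]
  simp only [Int.cast_zero, ne_eq, OfNat.ofNat_ne_zero, not_false_eq_true, zero_pow, add_zero,
    Nat.cast_ofNat]
  linarith

/-- The disc of radius `R` lies in the square of half-side `⌊R⌋`, so the defining series of
`latticeSum` is a finite sum. -/
lemma latticeTerm_eq_zero {a R : ℝ} (hR : 0 ≤ R) {k : ℤ × ℤ}
    (hk : k ∉ Finset.Icc (-⌊R⌋₊ : ℤ) ⌊R⌋₊ ×ˢ Finset.Icc (-⌊R⌋₊ : ℤ) ⌊R⌋₊) :
    (if (k.1 : ℝ) ^ 2 + (k.2 : ℝ) ^ 2 ≤ R ^ 2 then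
      1 / (a + ((k.1 : ℝ) ^ 2 + (k.2 : ℝ) ^ 2)) else 0) = 0 := by
  rw [if_neg]
  intro h
  apply hk
  have key : ∀ j : ℤ, (j : ℝ) ^ 2 ≤ R ^ 2 → j ∈ Finset.Icc (-⌊R⌋₊ : ℤ) ⌊R⌋₊ := by
    intro j hj
    have h1 := abs_le_of_sq_le_sq' hj hR
    rw [Finset.mem_Icc, Int.natCast_floor_eq_floor hR]
    refine ⟨?_, Int.le_floor.2 h1.2⟩
    have : -j ≤ ⌊R⌋ := Int.le_floor.2 (by push_cast; linarith)
    linarith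
  rw [Finset.mem_product]
  exact ⟨key _ (by nlinarith [sq_nonneg (k.2 : ℝ)]), key _ (by nlinarith [sq_nonneg (k.1 : ℝ)])⟩

/-- Enlarging the disc to the square of half-side `⌊R⌋` costs only `O(1)`. -/
lemma latticeSum_le {a R : ℝ} (ha : 1 ≤ a) (hR : 1 ≤ R) :
    latticeSum a R ≤ 2 * π * log R + 20 := by
  have hR0 : 0 ≤ R := by linarith
  have hfl : 1 ≤ ⌊R⌋₊ := Nat.one_le_floor_iff R |>.2 hR
  rw [latticeSum, tsum_eq_sum (fun k hk => latticeTerm_eq_zero hR0 hk), Finset.sum_product]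
  calc _ ≤ ∑ m ∈ Finset.Icc (-⌊R⌋₊ : ℤ) ⌊R⌋₊, ∑ n ∈ Finset.Icc (-⌊R⌋₊ : ℤ) ⌊R⌋₊,
        1 / (√(1 + (m : ℝ) ^ 2) ^ 2 + (n : ℝ) ^ 2) := by
        refine Finset.sum_le_sum fun m _ => Finset.sum_le_sum fun n _ => ?_
        rw [Real.sq_sqrt (by positivity)]
        split_ifs
        · exact one_div_le_one_div_of_le (by positivity) (by dsimp only; linarith)
        · positivity
    _ ≤ ∑ m ∈ Finset.Icc (-⌊R⌋₊ : ℤ) ⌊R⌋₊,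
        (π * (1 / √(1 + (m : ℝ) ^ 2)) + 1 / (1 + (m : ℝ) ^ 2)) := by
        refine Finset.sum_le_sum fun m _ => ?_
        have h := row_le (b := √(1 + (m : ℝ) ^ 2)) (by positivity) ⌊R⌋₊
        rw [Real.sq_sqrt (by positivity)] at *
        rw [mul_one_div]
        exact h
    _ ≤ π * (2 * log ⌊R⌋₊ + 3) + 5 := by
        rw [Finset.sum_add_distrib, ← Finset.mul_sum]
        exact add_le_add (mul_le_mul_of_nonneg_left (sum_inv_sqrt_le _) pi_pos.le)
          (sum_inv_one_add_sq_le _)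
    _ ≤ 2 * π * log R + 20 := by
        have : log ⌊R⌋₊ ≤ log R :=
          Real.log_le_log (by exact_mod_cast hfl) (Nat.floor_le hR0)
        nlinarith [pi_pos, pi_lt_four, mul_le_mul_of_nonneg_left this pi_pos.le, pi_lt_d2]

/-- Shrinking the disc to the square of half-side `⌊R/2⌋` costs only `O(1)`. The parameter `A`
replaces `a`, which may be close to `0`, by an upper bound that is at least `1`. -/
lemma le_latticeSum {a A R : ℝ} (ha : 0 < a) (haA : a ≤ A) (hA : 1 ≤ A) (hR : 1 ≤ R) :
    2 * π * log R - π * log A - 20 ≤ latticeSum a R := by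
  have hR0 : 0 ≤ R := by linarith
  set N := ⌊R / 2⌋₊ with hN
  have hNR : (N : ℝ) ≤ R / 2 := Nat.floor_le (by positivity)
  have hNR' : R / 2 < N + 1 := Nat.lt_floor_add_one _
  have hsum : Summable fun k : ℤ × ℤ => if (k.1 : ℝ) ^ 2 + (k.2 : ℝ) ^ 2 ≤ R ^ 2 then
      1 / (a + ((k.1 : ℝ) ^ 2 + (k.2 : ℝ) ^ 2)) else 0 :=
    summable_of_ne_finset_zero (fun k hk => latticeTerm_eq_zero hR0 hk)
  have hle := hsum.sum_le_tsum (Finset.Icc (-N : ℤ) N ×ˢ Finset.Icc (-N : ℤ) N)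
    (fun k _ => by split_ifs <;> positivity)
  rw [latticeSum]
  refine le_trans ?_ hle
  rw [Finset.sum_product]
  have key : ∀ j ∈ Finset.Icc (-N : ℤ) N, (j : ℝ) ^ 2 ≤ (R / 2) ^ 2 := by
    intro j hj
    rw [Finset.mem_Icc] at hj
    have h1 : -(N : ℝ) ≤ j := by exact_mod_cast hj.1
    have h2 : (j : ℝ) ≤ N := by exact_mod_cast hj.2
    exact sq_le_sq' (by linarith) (by linarith)
  have hcard : ∑ m ∈ Finset.Icc (-N : ℤ) N, (2 : ℝ) / (N + 1) ≤ 4 := by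
    rw [Finset.sum_const, Int.card_Icc, nsmul_eq_mul]
    have : ((N : ℤ) + 1 - (-N)).toNat = 2 * N + 1 := by omega
    rw [this, mul_div_assoc', div_le_iff₀ (by positivity)]
    push_cast; linarith
  have hlog : log R - 1 ≤ log (N + 1) := by
    have h1 : log (R / 2) ≤ log (N + 1) := Real.log_le_log (by positivity) hNR'.le
    rw [Real.log_div (by positivity) two_ne_zero] at h1
    linarith [Real.log_two_lt_d9]
  calc 2 * π * log R - π * log A - 20
      ≤ π * (2 * log (N + 1) - log A - 1) - 4 - 5 := by
        nlinarith [mul_le_mul_of_nonneg_left hlog pi_pos.le, pi_lt_d2]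
    _ ≤ ∑ m ∈ Finset.Icc (-N : ℤ) N,
        (π * (1 / √(A + (m : ℝ) ^ 2)) - 2 / (N + 1) - 1 / (1 + (m : ℝ) ^ 2)) := by
        rw [Finset.sum_sub_distrib, Finset.sum_sub_distrib, ← Finset.mul_sum]
        have := mul_le_mul_of_nonneg_left (le_sum_inv_sqrt hA N) pi_pos.le
        linarith [sum_inv_one_add_sq_le N]
    _ ≤ ∑ m ∈ Finset.Icc (-N : ℤ) N, ∑ n ∈ Finset.Icc (-N : ℤ) N,
        1 / (√(A + (m : ℝ) ^ 2) ^ 2 + (n : ℝ) ^ 2) := by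
        refine Finset.sum_le_sum fun m _ => ?_
        refine le_trans ?_ (le_row (b := √(A + (m : ℝ) ^ 2)) (by positivity) N)
        rw [Real.sq_sqrt (by positivity), mul_one_div]
        gcongr
    _ ≤ _ := by
        refine Finset.sum_le_sum fun m hm => Finset.sum_le_sum fun n hn => ?_
        rw [Real.sq_sqrt (by positivity), if_pos (by nlinarith [key m hm, key n hn])]
        exact one_div_le_one_div_of_le (by positivity) (by dsimp only; linarith)

/-- Let `σ : (0,1) → (0,∞)` be bounded with `σ(ε)²·log(1/ε) → +∞` as `ε → 0`, and for
each `ε ∈ (0,1)` let `C ε > 1` solve `C ε = (3/(8π²))·∑_{|k| ≤ 1/ε} σ(ε)²/(C ε − 1 + |k|²)`.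
Then `C ε / ((3/(4π))·σ(ε)²·log(1/ε)) → 1` as `ε → 0`; in particular `C ε → +∞`. -/
theorem stmt7 (σ C : ℝ → ℝ)
    (hσpos : ∀ ε ∈ Set.Ioo (0 : ℝ) 1, 0 < σ ε)
    (hσbdd : ∃ M : ℝ, ∀ ε ∈ Set.Ioo (0 : ℝ) 1, σ ε ≤ M)
    (hlim : Tendsto (fun ε => σ ε ^ 2 * Real.log (1 / ε))
      (nhdsWithin 0 (Set.Ioo 0 1)) atTop)
    (hC : ∀ ε ∈ Set.Ioo (0 : ℝ) 1, 1 < C ε ∧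
      C ε = 3 / (8 * π ^ 2) * (σ ε ^ 2 * latticeSum (C ε - 1) (1 / ε))) :
    Tendsto (fun ε => C ε / (3 / (4 * π) * (σ ε ^ 2 * Real.log (1 / ε))))
      (nhdsWithin 0 (Set.Ioo 0 1)) (nhds 1) ∧
    Tendsto C (nhdsWithin 0 (Set.Ioo 0 1)) atTop := by
  obtain ⟨M, hM⟩ := hσbdd
  have hM0 : 0 < M := (hσpos (1 / 2) (by norm_num)).trans_le (hM (1 / 2) (by norm_num))
  have hπ := pi_pos
  set l : ℝ := 3 / (8 * π ^ 2) with hl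
  have hl0 : 0 < l := by positivity
  set F := nhdsWithin (0 : ℝ) (Set.Ioo 0 1) with hF
  have hmem : ∀ᶠ ε in F, ε ∈ Set.Ioo (0 : ℝ) 1 := eventually_mem_nhdsWithin
  have hLtop : Tendsto (fun ε : ℝ => Real.log (1 / ε)) F atTop := by
    simp only [one_div]
    exact Real.tendsto_log_atTop.comp (tendsto_inv_nhdsGT_zero.mono_left
      (nhdsWithin_mono _ Ioo_subset_Ioi_self))
  have hR : ∀ ε ∈ Set.Ioo (0 : ℝ) 1, 1 ≤ 1 / ε := fun ε hε => by
    rw [le_div_iff₀ hε.1]; linarith [hε.2]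
  have hσM : ∀ ε ∈ Set.Ioo (0 : ℝ) 1, σ ε ^ 2 ≤ M ^ 2 := fun ε hε =>
    pow_le_pow_left₀ (hσpos ε hε).le (hM ε hε) 2
  have hlow : ∀ ε ∈ Set.Ioo (0 : ℝ) 1, ∀ A, 1 ≤ A → C ε - 1 ≤ A →
      l * (σ ε ^ 2 * (2 * π * Real.log (1 / ε) - π * Real.log A - 20)) ≤ C ε := by
    intro ε hε A hA hCA
    obtain ⟨h1, h2⟩ := hC ε hε
    have := le_latticeSum (sub_pos.2 h1) hCA hA (hR ε hε)
    conv_rhs => rw [h2]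
    gcongr
  -- If `C ε < K`, the lower bound with `A = max K 1` forces `C ε` to exceed `K` once
  -- `σ² log(1/ε)` is large; boundedness of `σ` controls the error `σ² (π log A + 20)`.
  have hCtop : Tendsto C F atTop := by
    refine tendsto_atTop.2 fun K => ?_
    set A := max K 1
    have hA : 1 ≤ A := le_max_right _ _
    have hlA : 0 ≤ Real.log A := Real.log_nonneg hA
    filter_upwards [hmem, hlim.eventually_ge_atTop
      ((K / l + M ^ 2 * (π * Real.log A + 20)) / (2 * π))] with ε hε hbig
    by_contra! hlt
    have h := hlow ε hε A hA (by linarith [le_max_left K 1])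
    rw [div_le_iff₀ (by positivity)] at hbig
    have h3 : σ ε ^ 2 * (π * Real.log A + 20) ≤ M ^ 2 * (π * Real.log A + 20) :=
      mul_le_mul_of_nonneg_right (hσM ε hε) (by positivity)
    have h4 : K / l ≤ σ ε ^ 2 * (2 * π * Real.log (1 / ε) - π * Real.log A - 20) := by linarith
    rw [div_le_iff₀ hl0] at h4
    linarith
  refine ⟨?_, hCtop⟩
  -- `C ε ≤ K log(1/ε)` eventually, so `log (C ε - 1)` is negligible against `log(1/ε)`.
  set K := l * M ^ 2 * (2 * π + 20) with hK
  have hK0 : 0 < K := by positivity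
  have hinv : Tendsto (fun ε : ℝ => (Real.log (1 / ε))⁻¹) F (nhds 0) :=
    tendsto_inv_atTop_zero.comp hLtop
  have hll : Tendsto (fun ε : ℝ => Real.log (Real.log (1 / ε)) / Real.log (1 / ε)) F (nhds 0) :=
    (Real.isLittleO_log_id_atTop.tendsto_div_nhds_zero).comp hLtop
  have hup : Tendsto (fun ε : ℝ => 1 + 10 / π * (Real.log (1 / ε))⁻¹) F (nhds 1) := by
    simpa using (hinv.const_mul (10 / π)).const_add 1
  have hdown : Tendsto (fun ε : ℝ => 1 - (Real.log K / 2 + 10 / π) * (Real.log (1 / ε))⁻¹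
      - 1 / 2 * (Real.log (Real.log (1 / ε)) / Real.log (1 / ε))) F (nhds 1) := by
    simpa only [mul_zero, sub_zero] using
      ((hinv.const_mul (Real.log K / 2 + 10 / π)).const_sub 1).sub (hll.const_mul (1 / 2))
  have hupper : ∀ᶠ ε in F, C ε ≤ l * (σ ε ^ 2 * (2 * π * Real.log (1 / ε) + 20)) := by
    filter_upwards [hmem, hCtop.eventually_ge_atTop 2] with ε hε hC2
    have := latticeSum_le (a := C ε - 1) (by linarith) (hR ε hε)
    conv_lhs => rw [(hC ε hε).2]
    gcongr
  -- The division by `l · 2π σ² L = (3/(4π)) σ² L` turns both bounds on `C ε` into `1 + o(1)`.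
  refine tendsto_of_tendsto_of_tendsto_of_le_of_le' hdown hup ?_ ?_
  · filter_upwards [hmem, hCtop.eventually_ge_atTop 2, hLtop.eventually_ge_atTop 1, hupper]
      with ε hε hC2 hL1 hCu
    have hs := hσpos ε hε
    set L := Real.log (1 / ε)
    have hL0 : 0 < L := by linarith
    have hCK : C ε ≤ K * L := by
      calc C ε ≤ l * (σ ε ^ 2 * (2 * π * L + 20)) := hCu
        _ ≤ l * (M ^ 2 * (2 * π * L + 20 * L)) := by
          have := hσM ε hε
          gcongr
          linarith
        _ = K * L := by rw [hK]; ring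
    have hlog : Real.log (C ε - 1) ≤ Real.log K + Real.log L := by
      rw [← Real.log_mul hK0.ne' hL0.ne']
      exact Real.log_le_log (by linarith) (by linarith)
    have h := hlow ε hε (C ε - 1) (by linarith) le_rfl
    rw [le_div_iff₀ (by positivity)]
    refine le_trans ?_ h
    calc _ = l * (σ ε ^ 2 * (2 * π * L - π * (Real.log K + Real.log L) - 20)) := by
          rw [hl]; field_simp; ring
      _ ≤ _ := by gcongr
  · filter_upwards [hmem, hLtop.eventually_ge_atTop 1, hupper] with ε hε hL1 hCu
    have hs := hσpos ε hε
    set L := Real.log (1 / ε)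
    have hL0 : 0 < L := by linarith
    rw [div_le_iff₀ (by positivity)]
    refine hCu.trans (le_of_eq ?_)
    rw [hl]; field_simp; ring
end

section
/- One has lim_{ε→0} (∑_{k ∈ ℤ², |k| ≤ 1/ε} 1/(1 + |k|²)) / (2π·log(1/ε)) = 1, i.e. the lattice sum ∑_{|k| ≤ 1/ε} 1/(1 + |k|²) is asymptotically equivalent to 2π·log(1/ε) as ε → 0. -/
open Real Filter Set MeasureTheory

/-!
Let `N m` be the number of lattice points with `|k|² ≤ m`. Comparing volume with the number of
points of a fine lattice in the unit disk gives the Gauss circle asymptotics `N m / m → π`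
(`tendsto_card_diskPoints`). The sum `∑_{|k|² ≤ m} 1/(1 + |k|²)` only depends on the values of `|k|²`,
so summation by parts (`diskSum_eq`) turns it into
`N m / (m + 1) + ∑_{j < m} N j / ((j + 1) (j + 2))`. The first term is bounded and the summands of
the second are asymptotic to `π / (j + 1)`, so dividing by the harmonic number `H_m` gives the limit
`π` (`tendsto_diskSum_div_harmonic`). With `m = ⌊R²⌋` one has `H_m ~ log R² = 2 log R`, and
`R = 1/ε` gives the claim.
-/

open scoped Pointwise

/-- The lattice points `k ∈ ℤ²` with `|k|² ≤ m`. The bounding box `[-m, m]²` contains all of them,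
since `|kᵢ| ≤ kᵢ²` for integers. -/
noncomputable def diskPoints (m : ℕ) : Finset (ℤ × ℤ) :=
  (Finset.Icc (-(m : ℤ)) m ×ˢ Finset.Icc (-(m : ℤ)) m).filter fun k => k.1 ^ 2 + k.2 ^ 2 ≤ (m : ℤ)

/-- The sum of `1 / (1 + |k|²)` over the lattice points with `|k|² ≤ m`. -/
noncomputable def diskSum (m : ℕ) : ℝ :=
  ∑ k ∈ diskPoints m, 1 / (1 + ((k.1 : ℝ) ^ 2 + (k.2 : ℝ) ^ 2))

lemma mem_diskPoints {m : ℕ} {k : ℤ × ℤ} :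
    k ∈ diskPoints m ↔ k.1 ^ 2 + k.2 ^ 2 ≤ (m : ℤ) := by
  simp only [diskPoints, Finset.mem_filter, Finset.mem_product, Finset.mem_Icc,
    and_iff_right_iff_imp]
  intro h
  refine ⟨⟨?_, ?_⟩, ?_, ?_⟩ <;>
    nlinarith [Int.le_self_sq k.1, Int.le_self_sq k.2, Int.le_self_sq (-k.1), Int.le_self_sq (-k.2),
      sq_nonneg k.1, sq_nonneg k.2]

lemma latticeSum_one_eq (R : ℝ) : latticeSum 1 R = diskSum ⌊R ^ 2⌋₊ := by
  have key : ∀ k : ℤ × ℤ, k ∈ diskPoints ⌊R ^ 2⌋₊ ↔ (k.1 : ℝ) ^ 2 + (k.2 : ℝ) ^ 2 ≤ R ^ 2 := by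
    intro k
    rw [mem_diskPoints, Int.natCast_floor_eq_floor (sq_nonneg R), Int.le_floor]
    push_cast
    rfl
  rw [latticeSum, diskSum, tsum_eq_sum (s := diskPoints ⌊R ^ 2⌋₊)]
  · exact Finset.sum_congr rfl fun k hk => if_pos ((key k).1 hk)
  · exact fun k hk => if_neg (mt (key k).2 hk)

/-- Passing from `m` to `m + 1` adds exactly the points with `|k|² = m + 1`. -/
lemma diskSum_succ (m : ℕ) :
    diskSum (m + 1) = diskSum m +
      (((diskPoints (m + 1)).card : ℝ) - (diskPoints m).card) / (m + 2) := by
  have hsub : diskPoints m ⊆ diskPoints (m + 1) := by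
    intro k hk
    rw [mem_diskPoints] at *
    push_cast
    linarith
  have hconst : ∀ k ∈ diskPoints (m + 1) \ diskPoints m,
      1 / (1 + ((k.1 : ℝ) ^ 2 + (k.2 : ℝ) ^ 2)) = 1 / ((m : ℝ) + 2) := by
    intro k hk
    rw [Finset.mem_sdiff, mem_diskPoints, mem_diskPoints] at hk
    have h : k.1 ^ 2 + k.2 ^ 2 = (m : ℤ) + 1 := by
      have := hk.1
      push_cast at this
      linarith [hk.2, Int.add_one_le_iff.2 (not_le.1 hk.2)]
    have h' : (k.1 : ℝ) ^ 2 + (k.2 : ℝ) ^ 2 = (m : ℝ) + 1 := by exact_mod_cast h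
    rw [h']
    ring
  rw [diskSum, diskSum, ← Finset.sum_sdiff hsub, Finset.sum_congr rfl hconst, Finset.sum_const,
    nsmul_eq_mul, Finset.card_sdiff_of_subset hsub, Nat.cast_sub (Finset.card_le_card hsub)]
  ring

/-- Summation by parts. -/
lemma diskSum_eq (m : ℕ) :
    diskSum m = ((diskPoints m).card : ℝ) / (m + 1) +
      ∑ j ∈ Finset.range m, ((diskPoints j).card : ℝ) / (j + 2) * (1 / ((j : ℝ) + 1)) := by
  induction m with
  | zero =>
    have : diskPoints 0 = {(0, 0)} := by decide
    simp [diskSum, this]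
  | succ m ih =>
    rw [diskSum_succ, ih, Finset.sum_range_succ]
    push_cast
    field_simp
    ring

/-- The closed unit disk, as a subset of the plane `Fin 2 → ℝ`. -/
def unitDisk : Set (Fin 2 → ℝ) :=
  WithLp.toLp 2 ⁻¹' Metric.closedBall (0 : EuclideanSpace ℝ (Fin 2)) 1

lemma mem_unitDisk {x : Fin 2 → ℝ} : x ∈ unitDisk ↔ x 0 ^ 2 + x 1 ^ 2 ≤ 1 := by
  simp [unitDisk, EuclideanSpace.norm_eq, Fin.sum_univ_two]

lemma convex_unitDisk : Convex ℝ unitDisk :=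
  (convex_closedBall (0 : EuclideanSpace ℝ (Fin 2)) 1).linear_preimage
    (WithLp.linearEquiv 2 ℝ (Fin 2 → ℝ)).symm.toLinearMap

lemma volume_unitDisk : volume.real unitDisk = π := by
  rw [measureReal_def, unitDisk, (PiLp.volume_preserving_toLp (Fin 2)).measure_preimage
    measurableSet_closedBall.nullMeasurableSet, EuclideanSpace.volume_closedBall]
  have : Real.Gamma 2 = 1 := by simp
  norm_num [this, Real.pi_pos.le]

lemma isBounded_unitDisk : Bornology.IsBounded unitDisk := by
  refine (Metric.isBounded_closedBall (x := (0 : Fin 2 → ℝ)) (r := 1)).subset fun x hx => ?_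
  rw [mem_unitDisk] at hx
  rw [mem_closedBall_zero_iff, pi_norm_le_iff_of_nonneg zero_le_one, Fin.forall_fin_two]
  simp only [Real.norm_eq_abs, ← sq_le_one_iff_abs_le_one]
  constructor <;> nlinarith [sq_nonneg (x 0), sq_nonneg (x 1)]

lemma measurableSet_unitDisk : MeasurableSet unitDisk :=
  (PiLp.volume_preserving_toLp (Fin 2)).measurable measurableSet_closedBall

/-- Rescaling by `√m` identifies the points of `m^{-1/2} ℤ²` in the unit disk with the lattice points
of norm at most `√m`. -/
lemma card_unitDisk_inter {m : ℕ} (hm : 0 < m) :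
    Nat.card ↑(unitDisk ∩ (√(m : ℝ))⁻¹ •
      (Submodule.span ℤ (Set.range (Pi.basisFun ℝ (Fin 2))) : Set (Fin 2 → ℝ))) =
      (diskPoints m).card := by
  have hm' : (0 : ℝ) < m := by exact_mod_cast hm
  have hs : 0 < √(m : ℝ) := Real.sqrt_pos.2 hm'
  let f : ℤ × ℤ → Fin 2 → ℝ := fun k => (√(m : ℝ))⁻¹ • ![(k.1 : ℝ), (k.2 : ℝ)]
  have hf : Function.Injective f := by
    intro k l h
    have h' := smul_right_injective (Fin 2 → ℝ) (inv_ne_zero hs.ne') h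
    have h0 := congrFun h' 0
    have h1 := congrFun h' 1
    simp at h0 h1
    exact Prod.ext h0 h1
  have hmem : ∀ k, f k ∈ unitDisk ↔ k ∈ diskPoints m := by
    intro k
    rw [mem_unitDisk, mem_diskPoints]
    have : f k 0 ^ 2 + f k 1 ^ 2 = ((k.1 : ℝ) ^ 2 + (k.2 : ℝ) ^ 2) / m := by
      simp [f, mul_pow, Real.sq_sqrt hm'.le]
      ring
    rw [this, div_le_one hm']
    exact_mod_cast Iff.rfl
  have himage : unitDisk ∩ (√(m : ℝ))⁻¹ •
      (Submodule.span ℤ (Set.range (Pi.basisFun ℝ (Fin 2))) : Set (Fin 2 → ℝ)) =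
      Set.image f (diskPoints m : Set (ℤ × ℤ)) := by
    ext x
    constructor
    · rintro ⟨hx, y, hy, rfl⟩
      rw [SetLike.mem_coe, Module.Basis.mem_span_iff_repr_mem] at hy
      obtain ⟨a, ha⟩ := hy 0
      obtain ⟨b, hb⟩ := hy 1
      have hy' : y = ![(a : ℝ), (b : ℝ)] := by
        ext i
        fin_cases i
        · simpa using ha.symm
        · simpa using hb.symm
      subst hy'
      exact ⟨(a, b), (hmem (a, b)).1 hx, rfl⟩
    · rintro ⟨k, hk, rfl⟩
      refine ⟨(hmem k).2 hk, Set.smul_mem_smul_set ?_⟩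
      rw [SetLike.mem_coe, Module.Basis.mem_span_iff_repr_mem, Fin.forall_fin_two]
      exact ⟨⟨k.1, by simp⟩, ⟨k.2, by simp⟩⟩
  rw [himage, Nat.card_image_of_injective hf]
  simp

/-- The leading-order Gauss circle asymptotics. -/
lemma tendsto_card_diskPoints :
    Tendsto (fun m : ℕ => ((diskPoints m).card : ℝ) / m) atTop (nhds π) := by
  have hscale : ∀ ⦃x y : ℝ⦄, 0 < x → x ≤ y → x • unitDisk ⊆ y • unitDisk := by
    intro x y hx hxy
    have hy : 0 < y := hx.trans_le hxy
    rintro _ ⟨z, hz, rfl⟩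
    refine ⟨(x / y) • z, ?_, ?_⟩
    · exact convex_unitDisk.smul_mem_of_zero_mem (mem_unitDisk.2 (by simp)) hz
        ⟨by positivity, (div_le_one hy).2 hxy⟩
    · simp [smul_smul, mul_div_cancel₀ x hy.ne']
  have h := tendsto_card_div_pow_atTop_volume' unitDisk isBounded_unitDisk measurableSet_unitDisk
    (convex_unitDisk.addHaar_frontier volume) hscale
  rw [volume_unitDisk] at h
  refine (h.comp (Real.tendsto_sqrt_atTop.comp tendsto_natCast_atTop_atTop)).congr' ?_
  filter_upwards [eventually_gt_atTop 0] with m hm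
  simp only [Function.comp_apply, Fintype.card_fin]
  rw [card_unitDisk_inter hm, Real.sq_sqrt (Nat.cast_nonneg m)]

lemma tendsto_card_diskPoints_add (c : ℝ) :
    Tendsto (fun m : ℕ => ((diskPoints m).card : ℝ) / (m + c)) atTop (nhds π) := by
  have h := tendsto_card_diskPoints.mul (tendsto_natCast_div_add_atTop (𝕜 := ℝ) c)
  rw [mul_one] at h
  refine h.congr' ?_
  filter_upwards [eventually_gt_atTop 0] with m hm
  have : (m : ℝ) ≠ 0 := by exact_mod_cast hm.ne'
  field_simp

lemma sum_eq_harmonic (m : ℕ) :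
    ∑ j ∈ Finset.range m, (1 / ((j : ℝ) + 1)) = (harmonic m : ℝ) := by
  simp [harmonic]

lemma tendsto_harmonic : Tendsto (fun m : ℕ => (harmonic m : ℝ)) atTop atTop := by
  refine tendsto_atTop_mono (fun m => log_add_one_le_harmonic m) ?_
  exact Real.tendsto_log_atTop.comp
    (tendsto_natCast_atTop_atTop.comp (tendsto_add_atTop_nat 1))

lemma tendsto_diskSum_div_harmonic :
    Tendsto (fun m : ℕ => diskSum m / (harmonic m : ℝ)) atTop (nhds π) := by
  have hlittle : (fun j : ℕ => (((diskPoints j).card : ℝ) / (j + 2) - π) * (1 / ((j : ℝ) + 1)))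
      =o[atTop] fun j : ℕ => 1 / ((j : ℝ) + 1) := by
    have h0 : (fun j : ℕ => ((diskPoints j).card : ℝ) / (j + 2) - π) =o[atTop]
        fun _ : ℕ => (1 : ℝ) := by
      rw [Asymptotics.isLittleO_one_iff]
      simpa using (tendsto_card_diskPoints_add 2).sub_const π
    simpa using h0.mul_isBigO (Asymptotics.isBigO_refl (fun j : ℕ => 1 / ((j : ℝ) + 1)) atTop)
  have hsum := hlittle.sum_range (fun j => by positivity)
    (by simpa only [sum_eq_harmonic] using tendsto_harmonic)
  simp only [sum_eq_harmonic] at hsum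
  have h1 := hsum.tendsto_div_nhds_zero
  have h2 := (tendsto_card_diskPoints_add 1).div_atTop tendsto_harmonic
  have h3 := (h2.add h1).add_const π
  rw [zero_add, zero_add] at h3
  refine h3.congr' ?_
  filter_upwards [tendsto_harmonic.eventually_gt_atTop 0] with m hm
  simp only [diskSum_eq, sub_mul, Finset.sum_sub_distrib, ← Finset.mul_sum, sum_eq_harmonic]
  field_simp
  ring

lemma tendsto_harmonic_floor_div_log :
    Tendsto (fun x : ℝ => (harmonic ⌊x⌋₊ : ℝ) / Real.log x) atTop (nhds 1) := by
  have hupper : Tendsto (fun x : ℝ => 1 / Real.log x + 1) atTop (nhds 1) := by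
    simpa using (tendsto_const_nhds.div_atTop Real.tendsto_log_atTop :
      Tendsto (fun x : ℝ => 1 / Real.log x) atTop (nhds 0)).add_const 1
  refine tendsto_of_tendsto_of_tendsto_of_le_of_le' tendsto_const_nhds hupper ?_ ?_
  · filter_upwards [eventually_gt_atTop 1] with x hx
    rw [one_le_div (Real.log_pos hx)]
    exact log_le_harmonic_floor x (by linarith)
  · filter_upwards [eventually_gt_atTop 1] with x hx
    have hlog := Real.log_pos hx
    rw [div_add_one hlog.ne']
    gcongr
    exact harmonic_floor_le_one_add_log x hx.le

/-- The lattice sum `∑_{|k| ≤ 1/ε} 1/(1 + |k|²)` is asymptotically equivalent to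
`2π·log(1/ε)` as `ε → 0`, i.e. their ratio tends to `1`. -/
theorem stmt8 :
    Tendsto (fun ε : ℝ => latticeSum 1 (1 / ε) / (2 * π * Real.log (1 / ε)))
      (nhdsWithin 0 (Set.Ioo 0 1)) (nhds 1) := by
  have hR : Tendsto (fun ε : ℝ => (1 / ε) ^ 2) (nhdsWithin 0 (Set.Ioo 0 1)) atTop := by
    have hinv : Tendsto (fun ε : ℝ => 1 / ε) (nhdsWithin 0 (Set.Ioo 0 1)) atTop := by
      simp only [one_div]
      exact tendsto_inv_nhdsGT_zero.mono_left (nhdsWithin_mono 0 fun x hx => hx.1)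
    exact (tendsto_pow_atTop two_ne_zero).comp hinv
  have h := (((tendsto_diskSum_div_harmonic.comp tendsto_nat_floor_atTop).mul
    tendsto_harmonic_floor_div_log).div_const π).comp hR
  rw [mul_one, div_self Real.pi_ne_zero] at h
  refine h.congr' ?_
  filter_upwards [hR.eventually (tendsto_nat_floor_atTop.eventually
    (tendsto_harmonic.eventually_gt_atTop 0))] with ε hε
  simp only [Function.comp_apply, latticeSum_one_eq]
  rw [div_mul_div_cancel₀ hε.ne', Real.log_pow, div_div]
  congr 1
  push_cast
  ring
end

section
/- Let σ : (0,1) → (0,∞) satisfy lim_{ε→0} σ(ε)²·log(1/ε) = +∞, and for each ε ∈ (0,1) let C_ε > 1 be the unique solution of C_ε = (3/(8π²))·∑_{|k| ≤ 1/ε} σ(ε)²/(C_ε − 1 + |k|²). Then there exists ε₀ ∈ (0,1) such that C_ε ≥ 2 for all ε ∈ (0, ε₀). -/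
/-!
The lattice sum diverges logarithmically: for `0 < a ≤ 1` and `R ≥ 4` one has
`latticeSum a R ≥ (log R) / 6`. Indeed, keep only the lattice points `(m, n)` with
`1 ≤ n ≤ m ≤ R / 2`: each contributes at least `1 / (3 m²)`, so the points with a given `m`
contribute at least `1 / (3 m)`, and the harmonic sum over `m` is at least
`log (R / 2) ≥ (log R) / 2` (`latticeSum_ge_log`).

If `C ε < 2`, this applies with `a = C ε - 1`, and the fixed-point equation gives
`C ε ≥ σ(ε)² log(1/ε) / (16 π²)`. By hypothesis the right-hand side is at least `2` for small `ε`,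
a contradiction.
-/

open Real Filter Set MeasureTheory

lemma summable_latticeSum_term (a R : ℝ) :
    Summable (fun k : ℤ × ℤ => if (k.1 : ℝ) ^ 2 + (k.2 : ℝ) ^ 2 ≤ R ^ 2 then
      1 / (a + ((k.1 : ℝ) ^ 2 + (k.2 : ℝ) ^ 2)) else 0) := by
  apply summable_of_hasFiniteSupport
  have bound : ∀ x y : ℤ, (x : ℝ) ^ 2 + (y : ℝ) ^ 2 ≤ R ^ 2 → x ∈ Set.Icc (-⌈|R|⌉) ⌈|R|⌉ := by
    intro x y h
    have h1 : |(x : ℝ)| ≤ |R| := sq_le_sq.mp (by nlinarith [sq_nonneg (y : ℝ)])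
    have h2 := abs_le.mp (h1.trans (Int.le_ceil |R|))
    exact ⟨by exact_mod_cast h2.1, by exact_mod_cast h2.2⟩
  refine ((Set.finite_Icc (-⌈|R|⌉) ⌈|R|⌉).prod (Set.finite_Icc (-⌈|R|⌉) ⌈|R|⌉)).subset ?_
  intro k hk
  have h : (k.1 : ℝ) ^ 2 + (k.2 : ℝ) ^ 2 ≤ R ^ 2 := by
    by_contra hn
    exact hk (if_neg hn)
  exact ⟨bound _ _ h, bound _ _ (by rwa [add_comm])⟩

/-- Restricting the lattice sum to the triangle `1 ≤ n ≤ m ≤ N`, which lies in the disc of radius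
`R` as soon as `2 N² ≤ R²`, bounds it below by a harmonic sum. -/
lemma latticeSum_ge_harmonic {a R : ℝ} (ha0 : 0 < a) (ha1 : a ≤ 1) (N : ℕ)
    (hN : 2 * (N : ℝ) ^ 2 ≤ R ^ 2) :
    (1 / 3) * ∑ m ∈ Finset.range N, ((m : ℝ) + 1)⁻¹ ≤ latticeSum a R := by
  -- The pair `⟨i, j⟩` with `j ≤ i < N` encodes the lattice point `(i + 1, j + 1)`.
  let e : (Σ _ : ℕ, ℕ) ↪ ℤ × ℤ :=
    ⟨fun p => ((p.1 : ℤ) + 1, (p.2 : ℤ) + 1), by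
      rintro ⟨a, b⟩ ⟨c, d⟩ h
      simp only [Prod.mk.injEq, add_left_inj, Nat.cast_inj] at h
      obtain ⟨rfl, rfl⟩ := h
      rfl⟩
  let s : Finset (Σ _ : ℕ, ℕ) := (Finset.range N).sigma fun m => Finset.range (m + 1)
  have key := (summable_latticeSum_term a R).sum_le_tsum (s.map e) (by
    intro k _
    split_ifs <;> positivity)
  refine le_trans ?_ key
  rw [Finset.sum_map, Finset.sum_sigma, Finset.mul_sum]
  refine Finset.sum_le_sum fun m hm => ?_
  have hmN : (m : ℝ) + 1 ≤ N := by exact_mod_cast Finset.mem_range.mp hm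
  have hm0 : (0 : ℝ) ≤ m := m.cast_nonneg
  have hrow : (1 / 3) * ((m : ℝ) + 1)⁻¹ =
      ∑ _n ∈ Finset.range (m + 1), 1 / (3 * ((m : ℝ) + 1) ^ 2) := by
    rw [Finset.sum_const, Finset.card_range, nsmul_eq_mul]
    push_cast
    field_simp
  rw [hrow]
  refine Finset.sum_le_sum fun n hn => ?_
  have hnm : (n : ℝ) ≤ m := by exact_mod_cast Nat.lt_succ_iff.mp (Finset.mem_range.mp hn)
  have hn0 : (0 : ℝ) ≤ n := n.cast_nonneg
  have hin : ((m : ℝ) + 1) ^ 2 + ((n : ℝ) + 1) ^ 2 ≤ R ^ 2 := by nlinarith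
  have he : e ⟨m, n⟩ = ((m : ℤ) + 1, (n : ℤ) + 1) := rfl
  simp only [he, Int.cast_add, Int.cast_natCast, Int.cast_one]
  rw [if_pos hin]
  apply one_div_le_one_div_of_le (by positivity)
  nlinarith

lemma latticeSum_ge_log {a R : ℝ} (ha0 : 0 < a) (ha1 : a ≤ 1) (hR : 4 ≤ R) :
    Real.log R / 6 ≤ latticeSum a R := by
  have hfl : (⌊R / 2⌋₊ : ℝ) ≤ R / 2 := Nat.floor_le (by linarith)
  have hfl_lt : R / 2 < (⌊R / 2⌋₊ : ℝ) + 1 := Nat.lt_floor_add_one _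
  have h1 := latticeSum_ge_harmonic (R := R) ha0 ha1 ⌊R / 2⌋₊ (by
    nlinarith [Nat.cast_nonneg (α := ℝ) ⌊R / 2⌋₊])
  have h2 := log_add_one_le_harmonic ⌊R / 2⌋₊
  simp only [harmonic, Rat.cast_sum, Rat.cast_inv, Nat.cast_add, Nat.cast_one] at h2
  have h3 : Real.log (R / 2) ≤ Real.log ((⌊R / 2⌋₊ : ℝ) + 1) :=
    Real.log_le_log (by linarith) hfl_lt.le
  -- `R ≤ (R / 2)²` because `R ≥ 4`.
  have h4 : Real.log R ≤ 2 * Real.log (R / 2) := by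
    have h5 : Real.log R ≤ Real.log ((R / 2) ^ 2) :=
      Real.log_le_log (by linarith) (by nlinarith)
    rwa [Real.log_pow, Nat.cast_ofNat] at h5
  push_cast at h2
  linarith

/-- Let `σ : (0,1) → (0,∞)` satisfy `σ(ε)²·log(1/ε) → +∞` as `ε → 0`, and for each
`ε ∈ (0,1)` let `C ε > 1` solve `C ε = (3/(8π²))·∑_{|k| ≤ 1/ε} σ(ε)²/(C ε − 1 + |k|²)`.
Then there exists `ε₀ ∈ (0,1)` such that `C ε ≥ 2` for all `ε ∈ (0, ε₀)`. -/
theorem stmt9 (σ C : ℝ → ℝ)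
    (hσpos : ∀ ε ∈ Set.Ioo (0 : ℝ) 1, 0 < σ ε)
    (hlim : Tendsto (fun ε => σ ε ^ 2 * Real.log (1 / ε))
      (nhdsWithin 0 (Set.Ioo 0 1)) atTop)
    (hC : ∀ ε ∈ Set.Ioo (0 : ℝ) 1, 1 < C ε ∧
      C ε = 3 / (8 * π ^ 2) * (σ ε ^ 2 * latticeSum (C ε - 1) (1 / ε))) :
    ∃ ε₀ ∈ Set.Ioo (0 : ℝ) 1, ∀ ε ∈ Set.Ioo (0 : ℝ) ε₀, 2 ≤ C ε := by
  have hev := hlim.eventually_ge_atTop (32 * π ^ 2)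
  rw [eventually_nhdsWithin_iff, Metric.eventually_nhds_iff] at hev
  obtain ⟨δ, hδ, hev⟩ := hev
  refine ⟨min δ (1 / 4), ⟨by positivity, (min_le_right _ _).trans_lt (by norm_num)⟩, ?_⟩
  rintro ε ⟨hε0, hε⟩
  have hεδ : ε < δ := hε.trans_le (min_le_left _ _)
  have hε4 : ε < 1 / 4 := hε.trans_le (min_le_right _ _)
  have hmem : ε ∈ Set.Ioo (0 : ℝ) 1 := ⟨hε0, by linarith⟩
  have hbig : 32 * π ^ 2 ≤ σ ε ^ 2 * Real.log (1 / ε) :=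
    hev (by rwa [Real.dist_eq, sub_zero, abs_of_pos hε0]) hmem
  obtain ⟨hC1, hCeq⟩ := hC ε hmem
  by_contra! hlt
  have hR : 4 ≤ 1 / ε := by
    rw [le_div_iff₀ hε0]
    linarith
  have hS := latticeSum_ge_log (a := C ε - 1) (by linarith) (by linarith) hR
  have hπ : 0 < π ^ 2 := by positivity
  have h2 : (2 : ℝ) ≤ 3 / (8 * π ^ 2) * (σ ε ^ 2 * latticeSum (C ε - 1) (1 / ε)) :=
    calc (2 : ℝ) = 3 / (8 * π ^ 2) * (32 * π ^ 2 / 6) := by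
          field_simp
          norm_num
      _ ≤ 3 / (8 * π ^ 2) * (σ ε ^ 2 * Real.log (1 / ε) / 6) := by gcongr
      _ = 3 / (8 * π ^ 2) * (σ ε ^ 2 * (Real.log (1 / ε) / 6)) := by ring
      _ ≤ _ := by gcongr
  linarith
end

section
/- Let σ : (0,1) → (0,∞) be bounded with lim_{ε→0} σ(ε)²·log(1/ε) = +∞, and for each ε ∈ (0,1) let C_ε > 1 be the unique solution of C_ε = (3/(8π²))·∑_{|k| ≤ 1/ε} σ(ε)²/(C_ε − 1 + |k|²). Then the quantity R_ε := C_ε − (3·σ(ε)²/(8π))·log(1 + 1/(ε²·(C_ε − 1))) remains bounded as ε → 0; that is, there exist M > 0 and ε₀ ∈ (0,1) such that |R_ε| ≤ M for all ε ∈ (0, ε₀). -/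
/-!
Write `a = C ε - 1` and `R = 1 / ε`. Everything rests on the uniform estimate
`|latticeSum a R - π log (1 + R² / a)| ≤ 9π` for `a ≥ 1` (`abs_latticeSum_sub_le`).

The estimate comes from a Gauss circle bound: tiling the plane by the unit squares of points
rounding to a given lattice point shows that the number `A(t)` of lattice points with `|k|² ≤ t`
satisfies `|A(t) - πt| ≤ 3π√(1 + t)` (`abs_card_discPoints_sub_le`). Summation by parts gives
`∑_{|k|² ≤ T} 1/(a + |k|²) = A(T)/(a + T) + ∫₀ᵀ A(t)/(a + t)² dt` (`sum_discPoints_eq`);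
replacing `A(t)` by `πt` gives exactly `π log (1 + T/a)`, and the error is at most
`3π + 3π ∫₀ᵀ (a + t)^(-3/2) dt ≤ 9π`.

Since `C ε` is `3σ²/(8π²)` times the lattice sum, the remainder is at most `27σ²/(8π)` as soon as
`C ε - 1 ≥ 1`. This holds for small `ε`: otherwise monotonicity of the lattice sum in `a` and the
estimate at `a = 1` bound `C ε` below by a quantity comparable to `σ² log (1/ε)`, which is large,
whereas `C ε < 2`.
-/

open Real Filter Set MeasureTheory

/-! ### Counting lattice points in discs -/

/-- The squared Euclidean norm of a lattice point. -/
def sqNorm (k : ℤ × ℤ) : ℝ := (k.1 : ℝ) ^ 2 + (k.2 : ℝ) ^ 2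

/-- The lattice points `k` with `|k|² ≤ T`. The enclosing box is large enough because
`|m| ≤ m²` for integers `m`. -/
noncomputable def discPoints (T : ℝ) : Finset (ℤ × ℤ) :=
  (Finset.Icc (-⌊T⌋) ⌊T⌋ ×ˢ Finset.Icc (-⌊T⌋) ⌊T⌋).filter fun k => sqNorm k ≤ T

lemma abs_le_sqNorm (k : ℤ × ℤ) : |(k.1 : ℝ)| ≤ sqNorm k ∧ |(k.2 : ℝ)| ≤ sqNorm k := by
  have key : ∀ m : ℤ, |(m : ℝ)| ≤ (m : ℝ) ^ 2 := by
    intro m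
    have : |m| ≤ m ^ 2 := by
      rw [← sq_abs]
      rcases (abs_nonneg m).eq_or_lt with h | h
      · simp [← h]
      · nlinarith
    exact_mod_cast this
  have h1 := key k.1
  have h2 := key k.2
  constructor <;> unfold sqNorm <;> nlinarith [sq_nonneg (k.1 : ℝ), sq_nonneg (k.2 : ℝ)]

lemma mem_discPoints {T : ℝ} {k : ℤ × ℤ} : k ∈ discPoints T ↔ sqNorm k ≤ T := by
  simp only [discPoints, Finset.mem_filter, Finset.mem_product, Finset.mem_Icc, and_iff_right_iff_imp]
  intro h
  obtain ⟨h1, h2⟩ := abs_le_sqNorm k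
  rw [← abs_le, ← abs_le, Int.le_floor, Int.le_floor]
  push_cast
  exact ⟨h1.trans h, h2.trans h⟩

lemma sqNorm_nonneg (k : ℤ × ℤ) : 0 ≤ sqNorm k := by unfold sqNorm; positivity

/-- The half-open unit square of points of the plane `ℂ` whose coordinates round to `k`. -/
def roundCell (k : ℤ × ℤ) : Set ℂ :=
  {z : ℂ | round z.re = k.1 ∧ round z.im = k.2}

lemma roundCell_eq (k : ℤ × ℤ) : roundCell k = Complex.measurableEquivRealProd ⁻¹'
    (Ico ((k.1 : ℝ) - 1 / 2) (k.1 + 1 / 2) ×ˢ Ico ((k.2 : ℝ) - 1 / 2) (k.2 + 1 / 2)) := by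
  ext z
  simp only [roundCell, round_eq, Int.floor_eq_iff, mem_ofPred_eq, mem_preimage, mem_prod, mem_Ico,
    Complex.measurableEquivRealProd_apply]
  constructor <;> rintro ⟨⟨_, _⟩, _, _⟩ <;> refine ⟨⟨?_, ?_⟩, ?_, ?_⟩ <;> linarith

lemma measurableSet_roundCell (k : ℤ × ℤ) : MeasurableSet (roundCell k) := by
  rw [roundCell_eq]
  exact Complex.measurableEquivRealProd.measurable (measurableSet_Ico.prod measurableSet_Ico)

lemma volume_roundCell (k : ℤ × ℤ) : volume (roundCell k) = 1 := by
  rw [roundCell_eq, Complex.volume_preserving_equiv_real_prod.measure_preimage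
    (measurableSet_Ico.prod measurableSet_Ico).nullMeasurableSet, Measure.volume_eq_prod,
    Measure.prod_prod, Real.volume_Ico, Real.volume_Ico]
  norm_num

lemma volume_biUnion_roundCell (s : Finset (ℤ × ℤ)) :
    volume (⋃ k ∈ s, roundCell k) = (s.card : ENNReal) := by
  rw [measure_biUnion_finset _ fun k _ => measurableSet_roundCell k]
  · simp [volume_roundCell]
  · intro k _ l _ hkl
    refine Set.disjoint_left.2 fun z hz hz' => hkl ?_
    exact Prod.ext (hz.1.symm.trans hz'.1) (hz.2.symm.trans hz'.2)

lemma norm_intComplex (k : ℤ × ℤ) : ‖(⟨k.1, k.2⟩ : ℂ)‖ = √(sqNorm k) := by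
  rw [Complex.norm_eq_sqrt_sq_add_sq]; rfl

lemma norm_sub_round_le (z : ℂ) : ‖z - ⟨round z.re, round z.im⟩‖ ≤ 1 := by
  refine (Complex.norm_le_abs_re_add_abs_im _).trans ?_
  have h1 := abs_sub_round z.re
  have h2 := abs_sub_round z.im
  simp only [Complex.sub_re, Complex.sub_im]
  linarith

/-- Gauss circle bound with an error of the order of the radius: the cells of the lattice points in
the disc of radius `√T` lie in the disc of radius `√T + 1` and cover the one of radius `√T - 1`. -/
lemma abs_card_discPoints_sub_le {T : ℝ} (hT : 0 ≤ T) :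
    |((discPoints T).card : ℝ) - π * T| ≤ 3 * π * √(1 + T) := by
  set r := √T with hr
  have hr0 : 0 ≤ r := Real.sqrt_nonneg _
  have hrT : r ^ 2 = T := Real.sq_sqrt hT
  have hs : r ≤ √(1 + T) := Real.sqrt_le_sqrt (by linarith)
  have hs1 : 1 ≤ √(1 + T) := Real.one_le_sqrt.2 (by linarith)
  have hpi := Real.pi_pos
  have vol : ∀ ρ : ℝ, 0 ≤ ρ → volume (Metric.closedBall (0 : ℂ) ρ) = ENNReal.ofReal (π * ρ ^ 2) := by
    intro ρ hρ
    rw [Complex.volume_closedBall, mul_comm, ENNReal.ofReal_mul hpi.le, ENNReal.ofReal_pow hρ]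
    congr 1
    exact (ENNReal.ofReal_coe_nnreal (p := NNReal.pi)).symm
  have upper : ((discPoints T).card : ℝ) ≤ π * (r + 1) ^ 2 := by
    have hsub : (⋃ k ∈ discPoints T, roundCell k) ⊆ Metric.closedBall (0 : ℂ) (r + 1) := by
      simp only [iUnion_subset_iff]
      intro k hk z hz
      have h1 : ‖(⟨k.1, k.2⟩ : ℂ)‖ ≤ r := by
        rw [norm_intComplex]; exact Real.sqrt_le_sqrt (mem_discPoints.1 hk)
      have h2 := norm_sub_round_le z
      rw [hz.1, hz.2] at h2
      have h3 := norm_le_norm_add_norm_sub' z (⟨k.1, k.2⟩ : ℂ)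
      rw [mem_closedBall_zero_iff]
      linarith
    have h := measure_mono (μ := volume) hsub
    rw [volume_biUnion_roundCell, vol _ (by linarith)] at h
    rw [← ENNReal.ofReal_natCast] at h
    exact (ENNReal.ofReal_le_ofReal_iff (by positivity)).1 h
  have lower : π * (T - 2 * r - 1) ≤ (discPoints T).card := by
    rcases lt_or_ge r 1 with h1 | h1
    · have : π * (T - 2 * r - 1) ≤ 0 := mul_nonpos_of_nonneg_of_nonpos hpi.le (by nlinarith)
      exact this.trans (Nat.cast_nonneg _)
    have hsub : Metric.closedBall (0 : ℂ) (r - 1) ⊆ ⋃ k ∈ discPoints T, roundCell k := by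
      intro z hz
      rw [mem_closedBall_zero_iff] at hz
      simp only [mem_iUnion]
      refine ⟨(round z.re, round z.im), ?_, rfl, rfl⟩
      rw [mem_discPoints]
      have h2 := norm_sub_round_le z
      have h3 := norm_le_norm_add_norm_sub z (⟨round z.re, round z.im⟩ : ℂ)
      have h4 := norm_intComplex (round z.re, round z.im)
      simp only at h4
      rw [h4] at h3
      exact (Real.sqrt_le_sqrt_iff hT).1 (by linarith)
    have h := measure_mono (μ := volume) hsub
    rw [volume_biUnion_roundCell, vol _ (by linarith), ← ENNReal.ofReal_natCast] at h
    have := (ENNReal.ofReal_le_ofReal_iff (Nat.cast_nonneg _)).1 h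
    nlinarith
  rw [abs_le]
  have h5 : π * (2 * r + 1) ≤ 3 * π * √(1 + T) := by nlinarith
  constructor <;> nlinarith

/-! ### Comparison of the lattice sum with the logarithm -/

lemma integral_sq_inv {a q T : ℝ} (ha : 0 < a) (hq : 0 ≤ q) (hqT : q ≤ T) :
    ∫ t in Icc q T, ((a + t) ^ 2)⁻¹ = 1 / (a + q) - 1 / (a + T) := by
  rw [integral_Icc_eq_integral_Ioc, ← intervalIntegral.integral_of_le hqT,
    intervalIntegral.integral_eq_sub_of_hasDerivAt (f := fun t => -(a + t)⁻¹)]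
  · ring
  · intro t ht
    rw [uIcc_of_le hqT] at ht
    have : a + t ≠ 0 := by linarith [ht.1]
    have h : HasDerivAt (fun x => a + x) 1 t := (hasDerivAt_id t).const_add a
    exact (h.inv this).neg.congr_deriv (by field_simp)
  · apply ContinuousOn.intervalIntegrable
    rw [uIcc_of_le hqT]
    intro t ht
    have : a + t ≠ 0 := by linarith [ht.1]
    exact ContinuousAt.continuousWithinAt (by fun_prop (disch := positivity))

lemma integral_id_mul_sq_inv {a T : ℝ} (ha : 0 < a) (hT : 0 ≤ T) :
    ∫ t in Icc 0 T, t * ((a + t) ^ 2)⁻¹ = log (1 + T / a) - T / (a + T) := by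
  rw [integral_Icc_eq_integral_Ioc, ← intervalIntegral.integral_of_le hT,
    intervalIntegral.integral_eq_sub_of_hasDerivAt (f := fun t => log (a + t) + a * (a + t)⁻¹)]
  · have : 1 + T / a = (a + T) / a := by field_simp
    rw [this, Real.log_div (by positivity) ha.ne']
    simp
    field_simp
    ring
  · intro t ht
    rw [uIcc_of_le hT] at ht
    have : a + t ≠ 0 := by linarith [ht.1]
    have h : HasDerivAt (fun x => a + x) 1 t := (hasDerivAt_id t).const_add a
    exact ((h.log this).add ((h.inv this).const_mul a)).congr_deriv (by field_simp; ring)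
  · apply ContinuousOn.intervalIntegrable
    rw [uIcc_of_le hT]
    intro t ht
    have : a + t ≠ 0 := by linarith [ht.1]
    exact ContinuousAt.continuousWithinAt (by fun_prop (disch := positivity))

lemma integrableOn_sqrt_mul_sq_inv {a T : ℝ} (ha : 0 < a) :
    IntegrableOn (fun t => √(a + t) * ((a + t) ^ 2)⁻¹) (Icc 0 T) := by
  apply ContinuousOn.integrableOn_Icc
  intro t ht
  have : a + t ≠ 0 := by linarith [ht.1]
  exact ContinuousAt.continuousWithinAt (by fun_prop (disch := positivity))

lemma integral_sqrt_mul_sq_inv_le {a T : ℝ} (ha : 1 ≤ a) (hT : 0 ≤ T) :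
    ∫ t in Icc 0 T, √(a + t) * ((a + t) ^ 2)⁻¹ ≤ 2 := by
  have hi := integrableOn_sqrt_mul_sq_inv (a := a) (T := T) (by linarith)
  rw [integral_Icc_eq_integral_Ioc, ← intervalIntegral.integral_of_le hT,
    intervalIntegral.integral_eq_sub_of_hasDerivAt (f := fun t => -2 * (√(a + t))⁻¹)]
  · have h1 : (√(a + 0))⁻¹ ≤ 1 := inv_le_one_of_one_le₀ (Real.one_le_sqrt.2 (by linarith))
    have h2 : 0 ≤ (√(a + T))⁻¹ := by positivity
    linarith
  · intro t ht
    rw [uIcc_of_le hT] at ht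
    have : 0 < a + t := by linarith [ht.1]
    have hs : 0 < √(a + t) := Real.sqrt_pos.2 this
    have h : HasDerivAt (fun x => a + x) 1 t := (hasDerivAt_id t).const_add a
    refine (((h.sqrt this.ne').inv hs.ne').const_mul (-2)).congr_deriv ?_
    have e : (a + t) ^ 2 = √(a + t) ^ 4 := by
      rw [show (4 : ℕ) = 2 * 2 from rfl, pow_mul, Real.sq_sqrt this.le]
    rw [e]
    field_simp
  · rw [intervalIntegrable_iff_integrableOn_Ioc_of_le hT]
    exact hi.mono_set Ioc_subset_Icc_self

lemma sum_indicator_eq_card_mul {T t : ℝ} (ht : t ∈ Icc 0 T) (f : ℝ → ℝ) :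
    ∑ k ∈ discPoints T, (Icc (sqNorm k) T).indicator f t = (discPoints t).card * f t := by
  have : discPoints t = (discPoints T).filter fun k => sqNorm k ≤ t := by
    ext k
    simp only [Finset.mem_filter, mem_discPoints]
    exact ⟨fun h => ⟨h.trans ht.2, h⟩, fun h => h.2⟩
  rw [this, Finset.card_filter]
  push_cast
  rw [Finset.sum_mul]
  refine Finset.sum_congr rfl fun k _ => ?_
  by_cases h : sqNorm k ≤ t <;> simp [indicator, h, ht.2]

lemma integrableOn_sq_inv {a T : ℝ} (ha : 0 < a) :
    IntegrableOn (fun t => ((a + t) ^ 2)⁻¹) (Icc 0 T) := by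
  apply ContinuousOn.integrableOn_Icc
  intro t ht
  have : a + t ≠ 0 := by linarith [ht.1]
  exact ContinuousAt.continuousWithinAt (by fun_prop (disch := positivity))

/-- Summation by parts: write `1/(a + q) = 1/(a + T) + ∫_q^T (a + t)⁻² dt` for each `q = |k|²`
and exchange the finite sum with the integral. -/
lemma sum_discPoints_eq {a T : ℝ} (ha : 0 < a) :
    IntegrableOn (fun t => ((discPoints t).card : ℝ) * ((a + t) ^ 2)⁻¹) (Icc 0 T) ∧
    ∑ k ∈ discPoints T, 1 / (a + sqNorm k) = (discPoints T).card / (a + T) +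
      ∫ t in Icc 0 T, ((discPoints t).card : ℝ) * ((a + t) ^ 2)⁻¹ := by
  have hcongr : EqOn (fun t => ∑ k ∈ discPoints T,
      (Icc (sqNorm k) T).indicator (fun t => ((a + t) ^ 2)⁻¹) t)
      (fun t => ((discPoints t).card : ℝ) * ((a + t) ^ 2)⁻¹) (Icc 0 T) :=
    fun t ht => sum_indicator_eq_card_mul ht _
  have hint : ∀ k ∈ discPoints T, IntegrableOn
      ((Icc (sqNorm k) T).indicator (fun t => ((a + t) ^ 2)⁻¹)) (Icc 0 T) := fun k _ =>
    (integrableOn_sq_inv ha).indicator measurableSet_Icc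
  refine ⟨(integrable_finsetSum _ hint).congr
    ((ae_restrict_iff' measurableSet_Icc).2 (ae_of_all _ hcongr)), ?_⟩
  rw [← setIntegral_congr_fun measurableSet_Icc hcongr, integral_finsetSum _ hint]
  have : ∀ k ∈ discPoints T,
      ∫ t in Icc 0 T, (Icc (sqNorm k) T).indicator (fun t => ((a + t) ^ 2)⁻¹) t
        = 1 / (a + sqNorm k) - 1 / (a + T) := by
    intro k hk
    rw [setIntegral_indicator measurableSet_Icc, inter_eq_right.2
      (Icc_subset_Icc_left (sqNorm_nonneg k)),
      integral_sq_inv ha (sqNorm_nonneg k) (mem_discPoints.1 hk)]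
  rw [Finset.sum_congr rfl this, Finset.sum_sub_distrib, Finset.sum_const, nsmul_eq_mul]
  ring

lemma abs_sum_discPoints_sub_le {a T : ℝ} (ha : 1 ≤ a) (hT : 0 ≤ T) :
    |∑ k ∈ discPoints T, 1 / (a + sqNorm k) - π * log (1 + T / a)| ≤ 9 * π := by
  have ha0 : 0 < a := by linarith
  have hpi := Real.pi_pos
  obtain ⟨hint, heq⟩ := sum_discPoints_eq (T := T) ha0
  have hint2 : IntegrableOn (fun t => t * ((a + t) ^ 2)⁻¹) (Icc 0 T) := by
    apply ContinuousOn.integrableOn_Icc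
    intro t ht
    have : a + t ≠ 0 := by linarith [ht.1]
    exact ContinuousAt.continuousWithinAt (by fun_prop (disch := positivity))
  have hsplit : ∑ k ∈ discPoints T, 1 / (a + sqNorm k) - π * log (1 + T / a) =
      ((discPoints T).card - π * T) / (a + T) +
        ∫ t in Icc 0 T, (((discPoints t).card : ℝ) * ((a + t) ^ 2)⁻¹
          - π * (t * ((a + t) ^ 2)⁻¹)) := by
    rw [integral_sub hint (hint2.const_mul π), integral_const_mul, integral_id_mul_sq_inv ha0 hT, heq]
    ring
  have h1 : |((discPoints T).card - π * T) / (a + T)| ≤ 3 * π := by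
    rw [abs_div, abs_of_pos (by positivity : 0 < a + T), div_le_iff₀ (by positivity)]
    refine (abs_card_discPoints_sub_le hT).trans ?_
    have : √(1 + T) ≤ a + T := (Real.sqrt_le_left (by linarith)).2 (by nlinarith)
    gcongr
  have h2 : |∫ t in Icc 0 T, (((discPoints t).card : ℝ) * ((a + t) ^ 2)⁻¹
          - π * (t * ((a + t) ^ 2)⁻¹))| ≤
      ∫ t in Icc 0 T, 3 * π * (√(a + t) * ((a + t) ^ 2)⁻¹) := by
    rw [← Real.norm_eq_abs]
    refine norm_integral_le_of_norm_le ((integrableOn_sqrt_mul_sq_inv ha0).const_mul _)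
      ((ae_restrict_iff' measurableSet_Icc).2 (ae_of_all _ fun t ht => ?_))
    have h0 : 0 ≤ ((a + t) ^ 2)⁻¹ := by positivity
    rw [← mul_assoc, ← sub_mul, Real.norm_eq_abs, abs_mul, abs_of_nonneg h0, ← mul_assoc]
    refine mul_le_mul_of_nonneg_right ((abs_card_discPoints_sub_le ht.1).trans ?_) h0
    gcongr
  rw [integral_const_mul] at h2
  have h3 := integral_sqrt_mul_sq_inv_le ha hT
  rw [hsplit]
  refine (abs_add_le _ _).trans ?_
  nlinarith

lemma latticeSum_eq_s11 (a R : ℝ) :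
    latticeSum a R = ∑ k ∈ discPoints (R ^ 2), 1 / (a + sqNorm k) := by
  unfold latticeSum
  rw [tsum_eq_sum (s := discPoints (R ^ 2))]
  · exact Finset.sum_congr rfl fun k hk => if_pos (mem_discPoints.1 hk)
  · intro k hk
    exact if_neg fun h => hk (mem_discPoints.2 h)

lemma abs_latticeSum_sub_le {a : ℝ} (ha : 1 ≤ a) (R : ℝ) :
    |latticeSum a R - π * log (1 + R ^ 2 / a)| ≤ 9 * π := by
  rw [latticeSum_eq_s11]
  exact abs_sum_discPoints_sub_le ha (sq_nonneg R)

/-! ### The self-consistent equation -/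

lemma latticeSum_anti {a b : ℝ} (ha : 0 < a) (hab : a ≤ b) (R : ℝ) :
    latticeSum b R ≤ latticeSum a R := by
  rw [latticeSum_eq_s11, latticeSum_eq_s11]
  refine Finset.sum_le_sum fun k _ => ?_
  have := sqNorm_nonneg k
  gcongr

/-- Let `σ : (0,1) → (0,∞)` be bounded with `σ(ε)²·log(1/ε) → +∞` as `ε → 0`, and let
`C ε > 1` solve `C ε = (3/(8π²))·∑_{|k| ≤ 1/ε} σ(ε)²/(C ε − 1 + |k|²)`. Then the
remainder `R_ε = C ε − (3σ(ε)²/(8π))·log(1 + 1/(ε²(C ε − 1)))` stays bounded: there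
exist `M > 0` and `ε₀ ∈ (0,1)` with `|R_ε| ≤ M` for all `ε ∈ (0, ε₀)`. -/
theorem stmt11 (σ C : ℝ → ℝ)
    (hσpos : ∀ ε ∈ Set.Ioo (0 : ℝ) 1, 0 < σ ε)
    (hσbdd : ∃ M : ℝ, ∀ ε ∈ Set.Ioo (0 : ℝ) 1, σ ε ≤ M)
    (hlim : Tendsto (fun ε => σ ε ^ 2 * Real.log (1 / ε))
      (nhdsWithin 0 (Set.Ioo 0 1)) atTop)
    (hC : ∀ ε ∈ Set.Ioo (0 : ℝ) 1, 1 < C ε ∧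
      C ε = 3 / (8 * π ^ 2) * (σ ε ^ 2 * latticeSum (C ε - 1) (1 / ε))) :
    ∃ M > (0 : ℝ), ∃ ε₀ ∈ Set.Ioo (0 : ℝ) 1, ∀ ε ∈ Set.Ioo (0 : ℝ) ε₀,
      |C ε - 3 * σ ε ^ 2 / (8 * π) * Real.log (1 + 1 / (ε ^ 2 * (C ε - 1)))| ≤ M := by
  obtain ⟨M, hM⟩ := hσbdd
  have hpi := Real.pi_pos
  have hσsq : ∀ ε ∈ Set.Ioo (0 : ℝ) 1, σ ε ^ 2 ≤ M ^ 2 := fun ε hε =>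
    pow_le_pow_left₀ (hσpos ε hε).le (hM ε hε) 2
  -- The threshold `8π + 9M²` is what excludes `C ε < 2` below.
  obtain ⟨ε₀, hε₀, hbig⟩ : ∃ ε₀ ∈ Set.Ioo (0 : ℝ) 1, ∀ ε ∈ Set.Ioo (0 : ℝ) ε₀,
      8 * π + 9 * M ^ 2 ≤ σ ε ^ 2 * Real.log (1 / ε) := by
    have h := hlim.eventually_ge_atTop (8 * π + 9 * M ^ 2)
    rw [nhdsWithin_Ioo_eq_nhdsGT one_pos] at h
    obtain ⟨u, hu, hsub⟩ := (mem_nhdsGT_iff_exists_Ioo_subset' one_pos).1 h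
    refine ⟨min u (1 / 2), ⟨lt_min hu (by norm_num), (min_le_right _ _).trans_lt (by norm_num)⟩,
      fun ε hε => hsub ⟨hε.1, hε.2.trans_le (min_le_left _ _)⟩⟩
  refine ⟨27 * M ^ 2 / (8 * π) + 1, by positivity, ε₀, hε₀, fun ε hε => ?_⟩
  have hε1 : ε ∈ Set.Ioo (0 : ℝ) 1 := ⟨hε.1, hε.2.trans hε₀.2⟩
  have hεpos : 0 < ε := hε.1
  obtain ⟨hC1, hCeq⟩ := hC ε hε1
  have hs := hσsq ε hε1
  have hs0 := sq_nonneg (σ ε)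
  have hb := hbig ε hε
  have ha : 1 ≤ C ε - 1 := by
    by_contra! hlt
    have h1 := latticeSum_anti (by linarith) hlt.le (1 / ε)
    have h2 := (abs_le.1 (abs_latticeSum_sub_le le_rfl (1 / ε))).1
    have h3 : 2 * log (1 / ε) ≤ log (1 + (1 / ε) ^ 2 / 1) := by
      have : 2 * log (1 / ε) = log ((1 / ε) ^ 2) := by rw [Real.log_pow]; norm_num
      rw [this]
      exact Real.log_le_log (by positivity) (by linarith)
    have h4 : π * (2 * log (1 / ε) - 9) ≤ latticeSum (C ε - 1) (1 / ε) := by nlinarith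
    have h5 : 3 / (8 * π ^ 2) * (σ ε ^ 2 * (π * (2 * log (1 / ε) - 9))) ≤ C ε := by
      rw [hCeq]
      gcongr
    have h6 : 3 / (8 * π ^ 2) * (σ ε ^ 2 * (π * (2 * log (1 / ε) - 9))) =
        3 * (2 * (σ ε ^ 2 * log (1 / ε)) - 9 * σ ε ^ 2) / (8 * π) := by
      field_simp
    rw [h6, div_le_iff₀ (by positivity)] at h5
    nlinarith [sq_nonneg M]
  have hmain := abs_latticeSum_sub_le ha (1 / ε)
  have hlog : 1 + 1 / (ε ^ 2 * (C ε - 1)) = 1 + (1 / ε) ^ 2 / (C ε - 1) := by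
    rw [div_pow, one_pow, div_div]
  have hid : C ε - 3 * σ ε ^ 2 / (8 * π) * Real.log (1 + 1 / (ε ^ 2 * (C ε - 1))) =
      3 * σ ε ^ 2 / (8 * π ^ 2) *
        (latticeSum (C ε - 1) (1 / ε) - π * log (1 + (1 / ε) ^ 2 / (C ε - 1))) := by
    rw [hlog]
    nth_rewrite 1 [hCeq]
    field_simp
  rw [hid, abs_mul, abs_of_nonneg (by positivity)]
  calc 3 * σ ε ^ 2 / (8 * π ^ 2) * _ ≤ 3 * M ^ 2 / (8 * π ^ 2) * (9 * π) := by gcongr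
    _ = 27 * M ^ 2 / (8 * π) := by ring_nf; field_simp
    _ ≤ _ := by linarith
end
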